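/- Let h ≥ 2 be an integer and let S_h(x) denote the set of h-free ideals of O_K with norm at most x. Then for every γ ∈ ℝ, lim_{x → ∞} (1/|S_h(x)|) · |{m ∈ S_h(x) : N(m) ≥ 3, (ω(m) − log log N(m)) / √(log log N(m)) ≤ γ}| = Φ(γ). -/

import Mathlib

/-!
The geometry of numbers gives `κ y + O(y ^ (1 - δ))` ideals of norm at most `y`, and through Euler
products this alone yields Mertens' estimate `∑_{N(p) ≤ y} 1 / N(p) = log log y + o(√(log log y))`.

Let `y = x ^ (1 / log log x)`. A sieve expresses the characteristic function of the number of prime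
divisors of norm at most `y` of a random `h`-free ideal of norm at most `x` as an Euler product,
with an error controlled by Rankin's trick with exponent `c = log log x / log x`, for which
`y ^ c = e`. After normalisation the product tends to `exp (-t ^ 2 / 2)`, and Lévy's continuity
theorem gives the Gaussian limit. The primes of norm between `y` and `x` contribute
`o(√(log log x))` on average, by Mertens' estimate again, and `log log N(m)` is within `1` of
`log log x` unless `N(m) < √x`; so `ω(m)` and `log log N(m)` may replace the truncated count and
`log log x` off a negligible set.
-/

open Filter MeasureTheory Topology
open scoped BigOperators

noncomputable section

variable (K : Type) [Field K] [NumberField K]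

/-- The standard Gaussian distribution function Φ. -/
def gaussPhi (γ : ℝ) : ℝ :=
  (Real.sqrt (2 * Real.pi))⁻¹ * ∫ u in Set.Iic γ, Real.exp (-u ^ 2 / 2)

/-- Number of distinct prime ideal divisors of an ideal. -/
def omegaI (m : Ideal (NumberField.RingOfIntegers K)) : ℕ :=
  Nat.card {p : Ideal (NumberField.RingOfIntegers K) // p.IsPrime ∧ p ∣ m}

/-- `m` is an `h`-free ideal: no prime ideal divides `m` to order `h` or more. -/
def IsHFree (h : ℕ) (m : Ideal (NumberField.RingOfIntegers K)) : Prop :=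
  m ≠ 0 ∧ ∀ p : Ideal (NumberField.RingOfIntegers K), p.IsPrime → ¬ p ^ h ∣ m

/-! ### Measure of thickened frontiers -/

section Thickening

open scoped Pointwise NNReal ENNReal

open Metric

/-- `A` has finite upper Minkowski content of codimension one: its `ε`-thickenings have measure
`O(ε)`. -/
def HasLinearThickening {E : Type*} [PseudoEMetricSpace E] [MeasurableSpace E]
    (μ : Measure E) (A : Set E) : Prop :=
  ∃ C : ℝ≥0, ∀ ε : ℝ, 0 < ε → ε ≤ 1 → μ (thickening ε A) ≤ C * ENNReal.ofReal ε

namespace HasLinearThickening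

variable {E : Type*} [PseudoEMetricSpace E] [MeasurableSpace E] {μ : Measure E}

theorem mono {A B : Set E} (hB : HasLinearThickening μ B) (hAB : A ⊆ B) :
    HasLinearThickening μ A := by
  obtain ⟨C, hC⟩ := hB
  exact ⟨C, fun ε hε hε1 => (measure_mono (thickening_subset_of_subset ε hAB)).trans (hC ε hε hε1)⟩

theorem iUnion {ι : Type*} [Finite ι] {A : ι → Set E} (hA : ∀ i, HasLinearThickening μ (A i)) :
    HasLinearThickening μ (⋃ i, A i) := by
  have := Fintype.ofFinite ι
  choose C hC using hA
  refine ⟨∑ i, C i, fun ε hε hε1 => ?_⟩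
  rw [thickening_iUnion, ENNReal.ofNNReal_finsetSum, Finset.sum_mul]
  exact (measure_iUnion_fintype_le _ _).trans (Finset.sum_le_sum fun i _ => hC i ε hε hε1)

end HasLinearThickening

theorem thickening_image_unitCube_subset {E : Type*} [PseudoMetricSpace E]
    {κ : Type*} [Fintype κ] {f : (κ → ℝ) → E} {L : ℝ≥0}
    (hf : LipschitzOnWith L f (Set.Icc 0 1)) {ε : ℝ} (hε : 0 < ε) {N : ℕ} (hN : 1 ≤ N * ε) :
    thickening ε (f '' Set.Icc 0 1) ⊆
      ⋃ k : κ → Fin (N + 1), ball (f fun j => (k j : ℝ) / N) ((L + 1) * ε) := by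
  have hN0 : (0 : ℝ) < N := pos_of_mul_pos_left (one_pos.trans_le hN) hε.le
  intro x hx
  obtain ⟨_, ⟨q, hq, rfl⟩, hx⟩ := mem_thickening_iff.mp hx
  have hfloor (j : κ) : ⌊N * q j⌋₊ ≤ N :=
    Nat.floor_le_of_le (mul_le_of_le_one_right hN0.le (hq.2 j))
  have hgrid : (fun j => (⌊N * q j⌋₊ : ℝ) / N) ∈ Set.Icc (0 : κ → ℝ) 1 :=
    ⟨fun j => by simp only [Pi.zero_apply]; positivity,
      fun j => div_le_one_of_le₀ (Nat.cast_le.mpr (hfloor j)) hN0.le⟩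
  have hdist : dist q (fun j => (⌊N * q j⌋₊ : ℝ) / N) ≤ ε := by
    refine (dist_pi_le_iff hε.le).mpr fun j => ?_
    have hle := Nat.floor_le (mul_nonneg hN0.le (hq.1 j))
    have hlt := Nat.lt_floor_add_one (N * q j)
    rw [Real.dist_eq, ← mul_le_mul_iff_right₀ hN0, ← abs_of_pos hN0, ← abs_mul, abs_of_pos hN0,
      mul_sub, mul_div_cancel₀ _ hN0.ne', abs_of_nonneg (sub_nonneg.mpr hle)]
    linarith
  refine Set.mem_iUnion.mpr ⟨fun j => ⟨⌊N * q j⌋₊, Nat.lt_succ_of_le (hfloor j)⟩, ?_⟩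
  calc dist x (f fun j => (⌊N * q j⌋₊ : ℝ) / N)
      ≤ dist x (f q) + dist (f q) (f fun j => (⌊N * q j⌋₊ : ℝ) / N) := dist_triangle _ _ _
    _ < ε + L * ε := add_lt_add_of_lt_of_le hx <|
        (hf.dist_le_mul q hq _ hgrid).trans (by gcongr)
    _ = (L + 1) * ε := by ring

variable {E : Type*} [NormedAddCommGroup E] [NormedSpace ℝ E] [FiniteDimensional ℝ E]
  [MeasurableSpace E] [BorelSpace E] (μ : Measure E) [μ.IsAddHaarMeasure]

theorem hasLinearThickening_image_unitCube {κ : Type*} [Fintype κ]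
    (hκ : Fintype.card κ + 1 = Module.finrank ℝ E) {f : (κ → ℝ) → E} {L : ℝ≥0}
    (hf : LipschitzOnWith L f (Set.Icc 0 1)) : HasLinearThickening μ (f '' Set.Icc 0 1) := by
  classical
  have hBfin : μ (ball (0 : E) 1) ≠ ⊤ := measure_ball_lt_top.ne
  lift μ (ball (0 : E) 1) to ℝ≥0 using hBfin with B hB
  refine ⟨3 ^ Fintype.card κ * (L + 1) ^ (Fintype.card κ + 1) * B, fun ε hε hε1 => ?_⟩
  lift ε to ℝ≥0 using hε.le
  norm_cast at hε hε1
  obtain ⟨N, hN, hN3⟩ : ∃ N : ℕ, 1 ≤ N * ε ∧ (N + 1) * ε ≤ 3 := by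
    refine ⟨⌈ε⁻¹⌉₊, ?_, ?_⟩
    · simpa [hε.ne'] using mul_le_mul_left (Nat.le_ceil ε⁻¹) ε
    · have h := mul_le_mul_left (Nat.ceil_lt_add_one (zero_le : 0 ≤ ε⁻¹)).le ε
      rw [add_mul, inv_mul_cancel₀ hε.ne', one_mul] at h
      calc ((⌈ε⁻¹⌉₊ : ℝ≥0) + 1) * ε = ⌈ε⁻¹⌉₊ * ε + ε := by ring
        _ ≤ (1 + 1) + 1 := by gcongr; exact h.trans (by gcongr)
        _ = 3 := by norm_num
  calc μ (thickening ε (f '' Set.Icc 0 1))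
      ≤ μ (⋃ k : κ → Fin (N + 1), ball (f fun j => (k j : ℝ) / N) ((L + 1) * ε)) :=
        measure_mono (thickening_image_unitCube_subset hf hε (by exact_mod_cast hN))
    _ ≤ ∑ k : κ → Fin (N + 1), μ (ball (f fun j => (k j : ℝ) / N) ((L + 1) * ε)) :=
        measure_iUnion_fintype_le _ _
    _ = (((N + 1) ^ Fintype.card κ * (((L + 1) * ε) ^ (Fintype.card κ + 1) * B) : ℝ≥0) :
          ℝ≥0∞) := by
        have hball (x : E) : μ (ball x ((L + 1) * ε)) =
            (((L + 1) * ε) ^ (Fintype.card κ + 1) * B : ℝ≥0) := by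
          rw [Measure.addHaar_ball_of_pos μ _ (by positivity), ← hκ, ← hB]
          norm_cast
          rw [ENNReal.ofReal_coe_nnreal]
          norm_cast
        simp only [hball, Finset.sum_const, Finset.card_univ, Fintype.card_fun, Fintype.card_fin,
          nsmul_eq_mul]
        norm_cast
    _ = (((N + 1) * ε) ^ Fintype.card κ * (L + 1) ^ (Fintype.card κ + 1) * B * ε : ℝ≥0) := by
        simp only [mul_pow]
        ring_nf
    _ ≤ _ := by
        rw [ENNReal.ofReal_coe_nnreal, ← ENNReal.coe_mul, ENNReal.coe_le_coe]
        gcongr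

theorem hasLinearThickening_image_face {ι : Type*} [Fintype ι]
    (hι : Fintype.card ι = Module.finrank ℝ E) {f : (ι → ℝ) → E} {L : ℝ≥0}
    (hf : LipschitzOnWith L f (Set.Icc 0 1)) (i : ι) {a : ℝ} (ha : a ∈ Set.Icc (0 : ℝ) 1) :
    HasLinearThickening μ (f '' {q | q ∈ Set.Icc 0 1 ∧ q i = a}) := by
  classical
  let extend (q : {j // j ≠ i} → ℝ) (j : ι) : ℝ := if h : j = i then a else q ⟨j, h⟩
  have hextend : LipschitzOnWith 1 extend (Set.Icc 0 1) := by
    refine (LipschitzWith.of_dist_le_mul fun q q' => ?_).lipschitzOnWith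
    rw [NNReal.coe_one, one_mul]
    refine (dist_pi_le_iff dist_nonneg).mpr fun j => ?_
    by_cases h : j = i
    · simp [extend, h]
    · simpa [extend, h] using dist_le_pi_dist q q' ⟨j, h⟩
  have hmaps : Set.MapsTo extend (Set.Icc 0 1) (Set.Icc 0 1) := fun q hq => by
    constructor <;> intro j <;> by_cases h : j = i
    · simpa [extend, h] using ha.1
    · simpa [extend, h] using hq.1 ⟨j, h⟩
    · simpa [extend, h] using ha.2
    · simpa [extend, h] using hq.2 ⟨j, h⟩
  have hcard : Fintype.card {j // j ≠ i} + 1 = Module.finrank ℝ E := by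
    rw [← hι, Fintype.card_subtype_compl, Fintype.card_subtype_eq]
    exact Nat.sub_add_cancel (Fintype.card_pos_iff.mpr ⟨i⟩)
  refine (hasLinearThickening_image_unitCube μ hcard (hf.comp hextend hmaps)).mono ?_
  rintro _ ⟨q, ⟨hq, rfl⟩, rfl⟩
  refine ⟨fun j => q j, ⟨fun j => hq.1 j, fun j => hq.2 j⟩, congrArg f (funext fun j => ?_)⟩
  by_cases h : j = i
  · simp [extend, h]
  · simp [extend, h]

end Thickening

section Frontier

open scoped Pointwise NNReal ENNReal

variable {E : Type*} [NormedAddCommGroup E] [NormedSpace ℝ E] {A : Set E} {x y : E} {r : ℝ}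

theorem segment_inter_frontier_nonempty (hx : x ∉ A) (hy : y ∈ A) :
    (segment ℝ x y ∩ frontier A).Nonempty := by
  by_contra hne
  have hcover : segment ℝ x y ⊆ interior A ∪ interior Aᶜ := fun z hz => by
    by_contra hz'
    rw [interior_compl, Set.mem_union, Set.mem_compl_iff, not_or, not_not] at hz'
    exact hne ⟨z, hz, hz'.2, hz'.1⟩
  have hdisj : Disjoint (interior A) (interior Aᶜ) :=
    disjoint_compl_right.mono interior_subset interior_subset
  rcases (convex_segment x y).isPreconnected.subset_or_subset isOpen_interior isOpen_interior
    hdisj hcover with h | h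
  · exact hx (interior_subset (h (left_mem_segment ℝ x y)))
  · exact interior_subset (h (right_mem_segment ℝ x y)) hy

theorem mem_thickening_frontier_of_dist_lt (hx : x ∉ A) (hy : y ∈ A) (hxy : dist x y < r) :
    x ∈ Metric.thickening r (frontier A) ∧ y ∈ Metric.thickening r (frontier A) := by
  obtain ⟨z, hz, hzA⟩ := segment_inter_frontier_nonempty hx hy
  have hadd := dist_add_dist_of_mem_segment hz
  have hxz : dist x z ≤ dist x y := by linarith [dist_nonneg (x := z) (y := y)]
  have hyz : dist y z ≤ dist x y := by
    rw [dist_comm y z]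
    linarith [dist_nonneg (x := x) (y := z)]
  exact ⟨Metric.mem_thickening_iff.mpr ⟨z, hzA, hxz.trans_lt hxy⟩,
    Metric.mem_thickening_iff.mpr ⟨z, hzA, hyz.trans_lt hxy⟩⟩

end Frontier

/-! ### Lattice points in scaled sets -/

section LatticePoints

open scoped Pointwise NNReal ENNReal

open Metric

theorem frontier_smul₀ {E : Type*} [AddCommGroup E] [Module ℝ E] [TopologicalSpace E]
    [ContinuousConstSMul ℝ E] {t : ℝ} (ht : t ≠ 0) (S : Set E) :
    frontier (t • S) = t • frontier S :=
  ((Homeomorph.smulOfNeZero t ht).image_frontier S).symm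

theorem thickening_smul₀ {E : Type*} [NormedAddCommGroup E] [NormedSpace ℝ E] {t : ℝ}
    (ht : 0 < t) (δ : ℝ) (S : Set E) : thickening (t * δ) (t • S) = t • thickening δ S := by
  ext x
  obtain ⟨y, rfl⟩ : ∃ y, t • y = x := ⟨t⁻¹ • x, smul_inv_smul₀ ht.ne' x⟩
  simp only [Set.smul_mem_smul_set_iff₀ ht.ne', mem_thickening_iff, Set.mem_smul_set,
    exists_exists_and_eq_and, dist_smul₀, Real.norm_of_nonneg ht.le, mul_lt_mul_iff_right₀ ht]

variable {E : Type*} [NormedAddCommGroup E] [NormedSpace ℝ E]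

section FundamentalDomain

variable {ι : Type*} [Fintype ι] (b : Module.Basis ι ℝ E)

theorem mem_vadd_fundamentalDomain_iff (v : Submodule.span ℤ (Set.range b)) (x : E) :
    x ∈ (v : E) +ᵥ ZSpan.fundamentalDomain b ↔ ZSpan.floor b x = v := by
  rw [Set.mem_vadd_set_iff_neg_vadd_mem, vadd_eq_add, ← ZSpan.fract_eq_self,
    ZSpan.fract_zSpan_add _ _ (neg_mem v.2), ZSpan.fract_apply, sub_eq_neg_add, add_left_inj,
    neg_inj, SetLike.coe_eq_coe]

theorem setOf_floor_mem_eq_biUnion (A : Set E) : {x | (ZSpan.floor b x : E) ∈ A} =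
    ⋃ v ∈ A ∩ Submodule.span ℤ (Set.range b), v +ᵥ ZSpan.fundamentalDomain b := by
  ext x
  simp only [Set.mem_ofPred_eq, Set.mem_iUnion, exists_prop]
  constructor
  · exact fun hx => ⟨_, ⟨hx, (ZSpan.floor b x).2⟩, (mem_vadd_fundamentalDomain_iff b _ x).mpr rfl⟩
  · rintro ⟨v, ⟨hvA, hvL⟩, hx⟩
    rwa [(mem_vadd_fundamentalDomain_iff b ⟨v, hvL⟩ x).mp hx]

variable [MeasurableSpace E] [BorelSpace E] [FiniteDimensional ℝ E] (μ : Measure E)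
  [μ.IsAddHaarMeasure]

theorem measurableSet_setOf_floor_mem {A : Set E} (hA : Bornology.IsBounded A) :
    MeasurableSet {x | (ZSpan.floor b x : E) ∈ A} := by
  rw [setOf_floor_mem_eq_biUnion]
  exact (ZSpan.setFinite_inter b hA).measurableSet_biUnion fun v _ =>
    (ZSpan.fundamentalDomain_measurableSet b).const_vadd v

theorem measureReal_setOf_floor_mem {A : Set E} (hA : Bornology.IsBounded A) :
    μ.real {x | (ZSpan.floor b x : E) ∈ A} =
      Nat.card ↥(A ∩ Submodule.span ℤ (Set.range b) : Set E) *
        μ.real (ZSpan.fundamentalDomain b) := by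
  have hfin := ZSpan.setFinite_inter b hA
  have hdisj : (hfin.toFinset : Set E).PairwiseDisjoint (· +ᵥ ZSpan.fundamentalDomain b) := by
    intro v hv w hw hvw
    rw [hfin.coe_toFinset] at hv hw
    refine Set.disjoint_left.mpr fun x hxv hxw => hvw ?_
    have hv' := (mem_vadd_fundamentalDomain_iff b ⟨v, hv.2⟩ x).mp hxv
    have hw' := (mem_vadd_fundamentalDomain_iff b ⟨w, hw.2⟩ x).mp hxw
    exact congrArg Subtype.val (hv'.symm.trans hw')
  have hvadd (v : E) : μ.real (v +ᵥ ZSpan.fundamentalDomain b) =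
      μ.real (ZSpan.fundamentalDomain b) := by rw [measureReal_def, measure_vadd, measureReal_def]
  have hset : {x | (ZSpan.floor b x : E) ∈ A} =
      ⋃ v ∈ hfin.toFinset, v +ᵥ ZSpan.fundamentalDomain b := by
    simp only [setOf_floor_mem_eq_biUnion, hfin.mem_toFinset]
  rw [hset, measureReal_biUnion_finset hdisj
    (fun v _ => (ZSpan.fundamentalDomain_measurableSet b).const_vadd v)
    (fun v _ => by
      rw [measure_vadd]; exact (ZSpan.fundamentalDomain_isBounded b).measure_lt_top.ne)]
  simp only [hvadd, Finset.sum_const, nsmul_eq_mul, Nat.card_coe_set_eq,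
    Set.ncard_eq_toFinset_card _ hfin]

end FundamentalDomain

variable [MeasurableSpace E] [BorelSpace E] [FiniteDimensional ℝ E] (μ : Measure E)
  [μ.IsAddHaarMeasure]

theorem abs_card_inter_span_mul_sub_le {ι : Type*} [Finite ι] (b : Module.Basis ι ℝ E) {A : Set E}
    (hA : Bornology.IsBounded A) (hAm : MeasurableSet A) {d : ℝ}
    (hd : ∀ x ∈ ZSpan.fundamentalDomain b, ‖x‖ < d) :
    |Nat.card ↥(A ∩ Submodule.span ℤ (Set.range b) : Set E) * μ.real (ZSpan.fundamentalDomain b) -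
      μ.real A| ≤ μ.real (thickening d (frontier A)) := by
  have := Fintype.ofFinite ι
  have hdist (x : E) : dist x (ZSpan.floor b x) < d := by
    rw [dist_eq_norm]
    exact hd _ (ZSpan.fract_mem_fundamentalDomain b x)
  have hthick : Bornology.IsBounded (thickening d (frontier A)) :=
    (hA.closure.subset frontier_subset_closure).thickening
  have hsymm : symmDiff {x | (ZSpan.floor b x : E) ∈ A} A ⊆ thickening d (frontier A) := by
    rintro x (⟨hx, hxA⟩ | ⟨hxA, hx⟩)
    · exact (mem_thickening_frontier_of_dist_lt hxA hx (hdist x)).1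
    · have hdist' : dist (ZSpan.floor b x : E) x < d := by
        rw [dist_comm]
        exact hdist x
      exact (mem_thickening_frontier_of_dist_lt (A := A) hx hxA hdist').2
  have hfloor : Bornology.IsBounded {x | (ZSpan.floor b x : E) ∈ A} :=
    (hA.thickening (δ := d)).subset fun x hx => mem_thickening_iff.mpr ⟨_, hx, hdist x⟩
  rw [← measureReal_setOf_floor_mem b μ hA]
  exact (abs_measureReal_sub_le_measureReal_symmDiff'
    (measurableSet_setOf_floor_mem b hA).nullMeasurableSet hAm.nullMeasurableSet
    hfloor.measure_lt_top.ne hA.measure_lt_top.ne).trans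
    (measureReal_mono hsymm hthick.measure_lt_top.ne)

theorem HasLinearThickening.measureReal_thickening_frontier_smul_le {S : Set E}
    (hS : HasLinearThickening μ (frontier S)) :
    ∃ C : ℝ≥0, ∀ d t : ℝ, 0 < d → d ≤ t → μ.real (thickening d (frontier (t • S))) ≤
      C * d * (t ^ Module.finrank ℝ E / t) := by
  obtain ⟨C, hC⟩ := hS
  refine ⟨C, fun d t hd hdt => ?_⟩
  have ht : 0 < t := hd.trans_le hdt
  have hscale : thickening d (frontier (t • S)) = t • thickening (d / t) (frontier S) := by
    rw [← thickening_smul₀ ht, mul_div_cancel₀ _ ht.ne', frontier_smul₀ ht.ne']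
  have hbound : μ.real (thickening (d / t) (frontier S)) ≤ C * (d / t) := by
    refine ENNReal.toReal_le_of_le_ofReal (by positivity) ?_
    rw [ENNReal.ofReal_mul C.coe_nonneg, ENNReal.ofReal_coe_nnreal]
    exact hC _ (by positivity) ((div_le_one ht).mpr hdt)
  rw [hscale, measureReal_def, Measure.addHaar_smul, ENNReal.toReal_mul,
    ENNReal.toReal_ofReal (abs_nonneg _), abs_of_pos (by positivity)]
  calc t ^ Module.finrank ℝ E * μ.real (thickening (d / t) (frontier S))
      ≤ t ^ Module.finrank ℝ E * (C * (d / t)) := by gcongr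
    _ = C * d * (t ^ Module.finrank ℝ E / t) := by ring

theorem card_smul_inter_lattice_sub_isBigO (L : Submodule ℤ E) [DiscreteTopology L]
    [IsZLattice ℝ L] {S : Set E} (hSb : Bornology.IsBounded S) (hSm : MeasurableSet S)
    (hS : HasLinearThickening μ (frontier S)) :
    ∃ V : ℝ, (fun t : ℝ => (Nat.card ↥(t • S ∩ L) : ℝ) - V * t ^ Module.finrank ℝ E) =O[atTop]
      fun t => t ^ Module.finrank ℝ E / t := by
  let b := (Module.Free.chooseBasis ℤ L).ofZLatticeBasis ℝ L
  have hb : Submodule.span ℤ (Set.range b) = L :=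
    (Module.Free.chooseBasis ℤ L).ofZLatticeBasis_span ℝ
  obtain ⟨d, hd, hD⟩ : ∃ d > 0, ∀ x ∈ ZSpan.fundamentalDomain b, ‖x‖ < d := by
    obtain ⟨d, hd, h⟩ := (ZSpan.fundamentalDomain_isBounded b).exists_pos_norm_le
    exact ⟨d + 1, by linarith, fun x hx => (h x hx).trans_lt (lt_add_one d)⟩
  have hcovol : 0 < μ.real (ZSpan.fundamentalDomain b) :=
    ENNReal.toReal_pos (ZSpan.measure_fundamentalDomain_ne_zero b)
      (ZSpan.fundamentalDomain_isBounded b).measure_lt_top.ne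
  obtain ⟨C, hC⟩ := hS.measureReal_thickening_frontier_smul_le μ
  refine ⟨μ.real S / μ.real (ZSpan.fundamentalDomain b), Asymptotics.IsBigO.of_bound
    (C * d / μ.real (ZSpan.fundamentalDomain b)) ?_⟩
  filter_upwards [eventually_ge_atTop d] with t hdt
  have ht : 0 < t := hd.trans_le hdt
  have hvol : μ.real (t • S) = t ^ Module.finrank ℝ E * μ.real S := by
    rw [measureReal_def, Measure.addHaar_smul, ENNReal.toReal_mul,
      ENNReal.toReal_ofReal (abs_nonneg _), abs_of_pos (by positivity), measureReal_def]
  have hcount := (abs_card_inter_span_mul_sub_le μ b (hSb.smul₀ t) (hSm.const_smul₀ t) hD).trans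
    (hC d t hd hdt)
  rw [hb, hvol] at hcount
  have hdiv : Nat.card ↥(t • S ∩ L) - μ.real S / μ.real (ZSpan.fundamentalDomain b) *
      t ^ Module.finrank ℝ E = (Nat.card ↥(t • S ∩ L) * μ.real (ZSpan.fundamentalDomain b) -
        t ^ Module.finrank ℝ E * μ.real S) / μ.real (ZSpan.fundamentalDomain b) := by
    field_simp
  rw [hdiv, Real.norm_eq_abs, abs_div, abs_of_pos hcovol, Real.norm_of_nonneg (by positivity),
    div_mul_eq_mul_div]
  exact div_le_div_of_nonneg_right hcount hcovol.le

end LatticePoints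

/-! ### Counting integral ideals -/

section NormLeOne

open scoped Pointwise NNReal ENNReal

open NumberField NumberField.mixedEmbedding NumberField.mixedEmbedding.fundamentalCone
  NumberField.InfinitePlace NumberField.Units.dirichletUnitTheorem

theorem exists_eq_norm_mul_exp_two_pi_mul_I (z : ℂ) :
    ∃ θ ∈ Set.Icc (0 : ℝ) 1, z = ‖z‖ * Complex.exp (2 * Real.pi * θ * Complex.I) := by
  refine ⟨Int.fract (z.arg / (2 * Real.pi)), ⟨Int.fract_nonneg _, (Int.fract_lt_one _).le⟩, ?_⟩
  have harg : (2 * Real.pi * (Int.fract (z.arg / (2 * Real.pi)) : ℝ) * Complex.I : ℂ) =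
      z.arg * Complex.I - ⌊z.arg / (2 * Real.pi)⌋ * (2 * Real.pi * Complex.I) := by
    rw [Int.fract]
    push_cast
    have hpi : (Real.pi : ℂ) ≠ 0 := Complex.ofReal_ne_zero.mpr Real.pi_ne_zero
    field_simp
  rw [harg, Complex.exp_sub, Complex.exp_int_mul_two_pi_mul_I, div_one,
    Complex.norm_mul_exp_arg_mul_I]

variable {F : Type*} [Field F]

/-- Polar coordinates on the mixed space: signs at the real places, absolute values at all places
and angles, in turns, at the complex places. -/
def polarParam (σ : {w : InfinitePlace F // IsReal w} → ℤˣ) (r : realSpace F)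
    (θ : {w : InfinitePlace F // IsComplex w} → ℝ) : mixedSpace F :=
  (fun w => (σ w : ℤ) * r w, fun w => r w * Complex.exp (2 * Real.pi * θ w * Complex.I))

theorem exists_eq_polarParam (x : mixedSpace F) :
    ∃ σ θ, θ ∈ Set.Icc 0 1 ∧ x = polarParam σ (normAtAllPlaces x) θ := by
  have hsign (a : ℝ) : ∃ u : ℤˣ, a = (u : ℤ) * |a| := by
    rcases abs_choice a with h | h
    · exact ⟨1, by simp [h]⟩
    · exact ⟨-1, by simp [h]⟩
  choose σ hσ using fun w => hsign (x.1 w)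
  choose θ hθ01 hθ using fun w => exists_eq_norm_mul_exp_two_pi_mul_I (x.2 w)
  refine ⟨σ, θ, ⟨fun w => (hθ01 w).1, fun w => (hθ01 w).2⟩, Prod.ext (funext fun w => ?_)
    (funext fun w => ?_)⟩
  · simpa only [polarParam, normAtAllPlaces_apply, normAtPlace_apply_of_isReal w.2,
      Real.norm_eq_abs] using hσ w
  · simpa only [polarParam, normAtAllPlaces_apply, normAtPlace_apply_of_isComplex w.2] using hθ w

variable [NumberField F]

open scoped Classical in
/-- The norms at the infinite places of a point of the closure of `normLeOne F`, as a function of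
a point of the unit cube: the coordinate at the distinguished place `w₀` is the scaling factor, and
the others are coordinates along a basis of the unit lattice. -/
def radialParam (c : realSpace F) : realSpace F :=
  c w₀ • expMapBasis (Function.update c w₀ 0)

/-- The parametrisation of the closure of `normLeOne F` with given signs `σ` at the real places by
the unit cube whose dimension is that of the mixed space. -/
def normLeOneParam (σ : {w : InfinitePlace F // IsReal w} → ℤˣ)
    (q : InfinitePlace F ⊕ {w : InfinitePlace F // IsComplex w} → ℝ) : mixedSpace F :=
  polarParam σ (radialParam (q ∘ Sum.inl)) (q ∘ Sum.inr)

theorem contDiff_radialParam : ContDiff ℝ 1 (radialParam (F := F)) := by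
  classical
  have hupdate : ContDiff ℝ 1 fun c : realSpace F => Function.update c w₀ (0 : ℝ) := by
    refine contDiff_pi.mpr fun w => ?_
    by_cases hw : w = w₀
    · simpa only [hw, Function.update_self] using contDiff_const
    · simpa only [Function.update_of_ne hw] using contDiff_apply ℝ ℝ w
  have hbasis : ContDiff ℝ 1 fun c : realSpace F => (completeBasis F).equivFun.symm c :=
    (completeBasis F).equivFun.symm.toLinearMap.toContinuousLinearMap.contDiff
  refine contDiff_pi.mpr fun w => ?_
  simp only [radialParam, Pi.smul_apply, smul_eq_mul, expMapBasis_apply, expMap_apply]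
  exact (contDiff_apply ℝ ℝ w₀).mul (Real.contDiff_exp.comp
    (contDiff_const.mul ((contDiff_apply ℝ ℝ w).comp (hbasis.comp hupdate))))

open scoped Classical in
theorem contDiff_normLeOneParam (σ : {w : InfinitePlace F // IsReal w} → ℤˣ) :
    ContDiff ℝ 1 (normLeOneParam σ) := by
  have hradial : ContDiff ℝ 1 fun q : InfinitePlace F ⊕ {w : InfinitePlace F // IsComplex w} → ℝ =>
      radialParam (q ∘ Sum.inl) :=
    contDiff_radialParam.comp (contDiff_pi.mpr fun w => contDiff_apply ℝ ℝ (Sum.inl w))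
  rw [contDiff_pi] at hradial
  refine ContDiff.prodMk (contDiff_pi.mpr fun w => ?_) (contDiff_pi.mpr fun w => ?_)
  · exact contDiff_const.mul (hradial w)
  refine (Complex.ofRealCLM.contDiff.comp (hradial w)).mul ?_
  exact ((contDiff_const.mul
    (Complex.ofRealCLM.contDiff.comp (contDiff_apply ℝ ℝ (Sum.inr w)))).mul contDiff_const).cexp

open scoped Classical in
theorem normAtAllPlaces_eq_radialParam_of_mem_frontier {x : mixedSpace F}
    (hx : x ∈ frontier (normLeOne F)) :
    ∃ c : realSpace F, c ∈ Set.Icc 0 1 ∧ (∃ w, c w = 0 ∨ c w = 1) ∧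
      normAtAllPlaces x = radialParam c := by
  obtain ⟨c, hc, _, ⟨y, hy, rfl⟩, hxy⟩ := closure_normLeOne_subset F hx.1
  have hyw (w : InfinitePlace F) (hw : w ≠ w₀) : y w ∈ Set.Icc (0 : ℝ) 1 := by
    simpa [hw] using hy w (Set.mem_univ _)
  have hy0 : Function.update y w₀ 0 = y :=
    Function.update_eq_self_iff.mpr (by simpa using hy w₀ (Set.mem_univ _) : y w₀ = 0).symm
  have hcube (w : InfinitePlace F) : Function.update y w₀ c w ∈ Set.Icc (0 : ℝ) 1 := by
    by_cases hw : w = w₀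
    · simpa only [hw, Function.update_self] using hc
    · simpa only [Function.update_of_ne hw] using hyw w hw
  refine ⟨Function.update y w₀ c, ⟨fun w => (hcube w).1, fun w => (hcube w).2⟩, ?_, ?_⟩
  · by_contra! hcoord
    have hopen (w : InfinitePlace F) : Function.update y w₀ c w ∈ Set.Ioo (0 : ℝ) 1 :=
      ⟨(hcube w).1.lt_of_ne' (hcoord w).1, (hcube w).2.lt_of_ne (hcoord w).2⟩
    have hc0 : c ∈ Set.Ioo (0 : ℝ) 1 := by simpa only [Function.update_self] using hopen w₀
    refine hx.2 (subset_interior_normLeOne F ⟨Function.update y w₀ (Real.log c), ?_, ?_⟩)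
    · rw [interior_paramSet, Set.mem_univ_pi]
      intro w
      by_cases hw : w = w₀
      · simpa [hw] using Real.log_neg hc0.1 hc0.2
      · simpa [hw] using hopen w
    · rw [← hxy, expMapBasis_apply'', Function.update_self, Real.exp_log hc0.1]
      congr 2
      refine funext fun w => ?_
      by_cases hw : w = w₀
      · simpa [hw] using (congrFun hy0 w₀)
      · simp [hw]
  · rw [← hxy, radialParam, Function.update_self, Function.update_idem, hy0]

theorem frontier_normLeOne_subset :
    frontier (normLeOne F) ⊆ ⋃ (σ : {w : InfinitePlace F // IsReal w} → ℤˣ)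
      (w : InfinitePlace F) (a : Fin 2),
        normLeOneParam σ '' {q | q ∈ Set.Icc 0 1 ∧ q (Sum.inl w) = (a : ℕ)} := by
  intro x hx
  obtain ⟨c, hc, ⟨w, hw⟩, hcx⟩ := normAtAllPlaces_eq_radialParam_of_mem_frontier hx
  obtain ⟨σ, θ, hθ, hxσ⟩ := exists_eq_polarParam x
  obtain ⟨a, ha⟩ : ∃ a : Fin 2, c w = (a : ℕ) := by
    rcases hw with hw | hw
    · exact ⟨0, by simpa using hw⟩
    · exact ⟨1, by simpa using hw⟩
  simp only [Set.mem_iUnion]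
  refine ⟨σ, w, a, Sum.elim c θ, ⟨⟨?_, ?_⟩, ha⟩, ?_⟩
  · rintro (v | v)
    exacts [hc.1 v, hθ.1 v]
  · rintro (v | v)
    exacts [hc.2 v, hθ.2 v]
  · rw [normLeOneParam, Sum.elim_comp_inl, Sum.elim_comp_inr, ← hcx, ← hxσ]

open scoped Classical in
theorem card_infinitePlace_sum_complex :
    Fintype.card (InfinitePlace F ⊕ {w : InfinitePlace F // IsComplex w}) =
      Module.finrank ℝ (mixedSpace F) := by
  rw [mixedEmbedding.finrank, Fintype.card_sum, ← card_add_two_mul_card_eq_rank,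
    card_eq_nrRealPlaces_add_nrComplexPlaces, nrComplexPlaces]
  ring

open scoped Classical in
theorem hasLinearThickening_frontier_normLeOne :
    HasLinearThickening volume (frontier (normLeOne F)) := by
  refine HasLinearThickening.mono (.iUnion fun σ => .iUnion fun w => .iUnion fun a => ?_)
    frontier_normLeOne_subset
  obtain ⟨L, hL⟩ := (contDiff_normLeOneParam σ).locallyLipschitz.locallyLipschitzOn
    |>.exists_lipschitzOnWith_of_compact isCompact_Icc
  refine hasLinearThickening_image_face volume card_infinitePlace_sum_complex hL (Sum.inl w)
    ⟨?_, ?_⟩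
  · positivity
  · exact_mod_cast Nat.le_of_lt_succ a.2

end NormLeOne

section IdealCount

open scoped Pointwise NNReal ENNReal

open NumberField NumberField.mixedEmbedding NumberField.mixedEmbedding.fundamentalCone
open Ideal Asymptotics
open scoped nonZeroDivisors

variable (F : Type*) [Field F] [NumberField F]

variable {F} in
theorem card_absNorm_le_mk0_eq {C : ClassGroup (𝓞 F)} {J : (Ideal (𝓞 F))⁰}
    (hJ : ClassGroup.mk0 J = C⁻¹) (s : ℝ) :
    Nat.card {I : (Ideal (𝓞 F))⁰ // absNorm (I : Ideal (𝓞 F)) ≤ s ∧ ClassGroup.mk0 I = C} =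
      Nat.card {I : (Ideal (𝓞 F))⁰ // (J : Ideal (𝓞 F)) ∣ I ∧
        Submodule.IsPrincipal (I : Ideal (𝓞 F)) ∧
        absNorm (I : Ideal (𝓞 F)) ≤ s * absNorm (J : Ideal (𝓞 F))} := by
  have hnorm (I : (Ideal (𝓞 F))⁰) : (absNorm (J * I : Ideal (𝓞 F)) : ℝ) ≤ s * absNorm J.1 ↔
      (absNorm I.1 : ℝ) ≤ s := by
    rw [map_mul, Nat.cast_mul, mul_comm,
      mul_le_mul_iff_left₀ (Nat.cast_pos.mpr (absNorm_pos_of_nonZeroDivisors J))]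
  have hprincipal (I : (Ideal (𝓞 F))⁰) :
      Submodule.IsPrincipal (J * I : Ideal (𝓞 F)) ↔ ClassGroup.mk0 I = C := by
    rw [← Submonoid.coe_mul, ← ClassGroup.mk0_eq_one_iff (SetLike.coe_mem _), map_mul, hJ,
      inv_mul_eq_one, eq_comm]
  refine Nat.card_congr (.ofBijective
    (fun I => ⟨J * I, Dvd.intro _ rfl, (hprincipal I).mpr I.2.2, (hnorm I).mpr I.2.1⟩) ⟨?_, ?_⟩)
  · exact fun I I' h => Subtype.ext (mul_left_cancel (congrArg Subtype.val h))
  · rintro ⟨I, hdvd, hI, hIs⟩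
    obtain ⟨I', rfl⟩ := nonZeroDivisors_dvd_iff_dvd_coe.mpr hdvd
    exact ⟨⟨I', (hnorm I').mp hIs, (hprincipal I').mp hI⟩, rfl⟩

theorem smul_normLeOne {t : ℝ} (ht : 0 < t) :
    t • normLeOne F =
      {x ∈ fundamentalCone F | mixedEmbedding.norm x ≤ t ^ Module.finrank ℚ F} := by
  ext x
  rw [Set.mem_smul_set_iff_inv_smul_mem₀ ht.ne', mem_normLeOne,
    smul_mem_iff_mem (inv_ne_zero ht.ne'), mixedEmbedding.norm_smul, abs_of_pos (inv_pos.mpr ht),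
    inv_pow, inv_mul_le_iff₀ (by positivity), mul_one]
  rfl

theorem card_smul_normLeOne_inter_idealLattice (J : (Ideal (𝓞 F))⁰) {t : ℝ} (ht : 0 < t) :
    Nat.card ↥(t • normLeOne F ∩ idealLattice F (FractionalIdeal.mk0 F J) : Set (mixedSpace F)) =
      Nat.card {a : idealSet F J //
        mixedEmbedding.norm (a : mixedSpace F) ≤ t ^ Module.finrank ℚ F} := by
  rw [smul_normLeOne F ht]
  refine Nat.card_congr ((Equiv.subtypeEquivProp ?_).trans
    (Equiv.subtypeSubtypeEquivSubtypeInter (· ∈ idealSet F J)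
      (mixedEmbedding.norm · ≤ t ^ Module.finrank ℚ F)).symm)
  exact funext fun x => propext and_right_comm

open scoped Classical in
theorem card_absNorm_le_mk0_eq_sub_isBigO (C : ClassGroup (𝓞 F)) :
    ∃ V : ℝ, (fun s : ℝ =>
      (Nat.card {I : (Ideal (𝓞 F))⁰ // absNorm (I : Ideal (𝓞 F)) ≤ s ∧ ClassGroup.mk0 I = C} : ℝ) -
        V * s) =O[atTop] fun s => s ^ (1 - 1 / (Module.finrank ℚ F : ℝ)) := by
  obtain ⟨J, hJ⟩ := ClassGroup.mk0_surjective C⁻¹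
  obtain ⟨V, hV⟩ := card_smul_inter_lattice_sub_isBigO volume
    (idealLattice F (FractionalIdeal.mk0 F J)) (isBounded_normLeOne F)
    (measurableSet_normLeOne F) hasLinearThickening_frontier_normLeOne
  rw [mixedEmbedding.finrank] at hV
  set n := Module.finrank ℚ F
  have hn : n ≠ 0 := Module.finrank_pos.ne'
  have hA : 0 < (absNorm J.1 : ℝ) := Nat.cast_pos.mpr (absNorm_pos_of_nonZeroDivisors J)
  set A : ℝ := (absNorm J.1 : ℝ)
  have hw : (Units.torsionOrder F : ℝ) ≠ 0 := Nat.cast_ne_zero.mpr (Units.torsionOrder_ne_zero F)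
  have htop : Tendsto (fun s : ℝ => (s * A) ^ (1 / (n : ℝ))) atTop atTop :=
    (tendsto_rpow_atTop (by positivity)).comp (tendsto_id.atTop_mul_const hA)
  have hpow {s : ℝ} (hs : 0 < s) : ((s * A) ^ (1 / (n : ℝ))) ^ n = s * A := by
    rw [one_div, Real.rpow_inv_natCast_pow (by positivity) hn]
  refine ⟨V * A / Units.torsionOrder F, (((hV.comp_tendsto htop).const_mul_left
    (Units.torsionOrder F : ℝ)⁻¹).congr' ?_ ?_).of_const_mul_right (c := A ^ (1 - 1 / (n : ℝ)))⟩
  · filter_upwards [eventually_gt_atTop 0] with s hs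
    rw [Function.comp_apply, card_smul_normLeOne_inter_idealLattice F J (by positivity), hpow hs,
      ← card_isPrincipal_dvd_norm_le, ← card_absNorm_le_mk0_eq hJ, Nat.cast_mul]
    field_simp
  · filter_upwards [eventually_gt_atTop 0] with s hs
    rw [Function.comp_apply, hpow hs, ← Real.mul_rpow hA.le hs.le, mul_comm A,
      Real.rpow_sub (by positivity), Real.rpow_one]

theorem card_absNorm_le_eq_sum_classGroup (s : ℝ) :
    Nat.card {I : (Ideal (𝓞 F))⁰ // absNorm (I : Ideal (𝓞 F)) ≤ s} = ∑ C : ClassGroup (𝓞 F),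
      Nat.card {I : (Ideal (𝓞 F))⁰ // absNorm (I : Ideal (𝓞 F)) ≤ s ∧ ClassGroup.mk0 I = C} := by
  have hfin : Finite {I : (Ideal (𝓞 F))⁰ // absNorm (I : Ideal (𝓞 F)) ≤ s} :=
    (Ideal.finite_setOfPred_absNorm_le₀ (S := 𝓞 F) ⌊s⌋₊).subset fun _ hI => Nat.le_floor hI
  rw [← Nat.card_congr (Equiv.sigmaFiberEquiv
    fun I : {I : (Ideal (𝓞 F))⁰ // absNorm (I : Ideal (𝓞 F)) ≤ s} => ClassGroup.mk0 I.1),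
    Nat.card_sigma]
  exact Finset.sum_congr rfl fun C _ => Nat.card_congr
    (Equiv.subtypeSubtypeEquivSubtypeInter (fun I : (Ideal (𝓞 F))⁰ => (absNorm I.1 : ℝ) ≤ s)
      fun I => ClassGroup.mk0 I = C)

theorem exists_card_absNorm_le_sub_isBigO :
    ∃ κ > 0, (fun s : ℝ =>
      (Nat.card {I : (Ideal (𝓞 F))⁰ // absNorm (I : Ideal (𝓞 F)) ≤ s} : ℝ) - κ * s) =O[atTop]
        fun s => s ^ (1 - 1 / (Module.finrank ℚ F : ℝ)) := by
  choose V hV using card_absNorm_le_mk0_eq_sub_isBigO F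
  have hn : 0 < 1 / (Module.finrank ℚ F : ℝ) :=
    one_div_pos.mpr (Nat.cast_pos.mpr Module.finrank_pos)
  have hcount : (fun s : ℝ =>
      (Nat.card {I : (Ideal (𝓞 F))⁰ // absNorm (I : Ideal (𝓞 F)) ≤ s} : ℝ) - (∑ C, V C) * s)
        =O[atTop] fun s => s ^ (1 - 1 / (Module.finrank ℚ F : ℝ)) := by
    simpa only [card_absNorm_le_eq_sum_classGroup, Nat.cast_sum, Finset.sum_mul,
      ← Finset.sum_sub_distrib] using IsBigO.fun_sum fun C (_ : C ∈ Finset.univ) => hV C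
  refine ⟨_, ?_, hcount⟩
  have hlim : Tendsto (fun s : ℝ =>
      (Nat.card {I : (Ideal (𝓞 F))⁰ // absNorm (I : Ideal (𝓞 F)) ≤ s} : ℝ) / s) atTop
        (𝓝 (∑ C, V C)) := by
    have herr : Tendsto (fun s : ℝ => s ^ (1 - 1 / (Module.finrank ℚ F : ℝ)) / s) atTop (𝓝 0) := by
      refine (tendsto_rpow_neg_atTop hn).congr' ?_
      filter_upwards [eventually_gt_atTop 0] with s hs
      rw [← Real.rpow_sub_one hs.ne', sub_sub_cancel_left]
    refine tendsto_sub_nhds_zero_iff.mp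
      (((hcount.mul (isBigO_refl (·⁻¹) atTop)).trans_tendsto herr).congr' ?_)
    filter_upwards [eventually_gt_atTop 0] with s hs
    field_simp
  rw [tendsto_nhds_unique hlim (Ideal.tendsto_norm_le_div_atTop₀ F)]
  have hregulator := Units.regulator_pos F
  have hclass : 0 < classNumber F := classNumber_pos F
  have htorsion : 0 < Units.torsionOrder F := (Units.torsionOrder_ne_zero F).bot_lt
  have hdiscr : (0 : ℝ) < |(discr F : ℝ)| :=
    abs_pos.mpr (Int.cast_ne_zero.mpr (discr_ne_zero F))
  positivity

end IdealCount

/-! ### Arithmetic semigroups -/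

/-- Knopfmacher's arithmetical semigroups satisfying Axiom A: every nonzero element factors uniquely
into primes, there are no nontrivial units, and the number of nonzero elements of norm at most `x`
is `κ x` up to a power-saving error. A zero element is included so that the ideals of a Dedekind
domain are directly an example. -/
class ArithmeticSemigroup (M : Type*) [CommMonoidWithZero M] extends
    UniqueFactorizationMonoid M where
  subsingleton_units : Subsingleton Mˣ
  norm : M →*₀ ℕ
  finite_norm_le : ∀ n : ℕ, {m : M | norm m ≤ n}.Finite
  exists_card_sub_isBigO : ∃ κ > (0 : ℝ), ∃ δ > (0 : ℝ),
    (fun x : ℝ => (Nat.card {m : M // m ≠ 0 ∧ (norm m : ℝ) ≤ x} : ℝ) - κ * x) =O[atTop]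
      fun x => x ^ (1 - δ)

namespace ArithmeticSemigroup

open Asymptotics

attribute [instance] subsingleton_units

section Basic

variable {M : Type*} [CommMonoidWithZero M] [ArithmeticSemigroup M]

theorem two_le_norm {m : M} (h0 : m ≠ 0) (h1 : m ≠ 1) : 2 ≤ norm m := by
  by_contra! hm
  refine Set.infinite_range_of_injective
    (pow_injective_of_not_isUnit (mt isUnit_iff_eq_one.mp h1) h0)
    ((finite_norm_le (M := M) 1).subset ?_)
  rintro _ ⟨k, rfl⟩
  rw [Set.mem_ofPred_eq, map_pow]
  exact pow_le_one' (Nat.le_of_lt_succ hm) k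

theorem norm_pos {m : M} (hm : m ≠ 0) : 0 < norm m := by
  rcases eq_or_ne m 1 with rfl | h1
  · simp
  · exact two_pos.trans_le (two_le_norm hm h1)

theorem one_le_norm {m : M} (hm : m ≠ 0) : (1 : ℝ) ≤ norm m := by
  exact_mod_cast norm_pos hm

theorem two_le_norm_of_prime {p : M} (hp : Prime p) : (2 : ℝ) ≤ norm p := by
  exact_mod_cast two_le_norm hp.ne_zero hp.ne_one

theorem norm_le_of_dvd {d m : M} (hm : m ≠ 0) (h : d ∣ m) : (norm d : ℝ) ≤ norm m := by
  exact_mod_cast Nat.le_of_dvd (norm_pos hm) (map_dvd norm h)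

theorem eq_of_prime_dvd_prime {p q : M} (hp : Prime p) (hq : Prime q) (h : p ∣ q) : p = q :=
  associated_iff_eq.mp ((hp.dvd_prime_iff_associated hq).mp h)

variable (M)

theorem finite_ne_zero_norm_le (x : ℝ) : {m : M | m ≠ 0 ∧ (norm m : ℝ) ≤ x}.Finite :=
  (finite_norm_le ⌊x⌋₊).subset fun _ hm => Nat.le_floor hm.2

/-- The set of nonzero elements of norm at most `x`. -/
def elementsLE (x : ℝ) : Finset M :=
  (finite_ne_zero_norm_le M x).toFinset

open scoped Classical in
/-- The set of primes of norm at most `x`. -/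
def primesLE (x : ℝ) : Finset M :=
  {p ∈ elementsLE M x | Prime p}

variable {M}

@[simp]
theorem mem_elementsLE {x : ℝ} {m : M} : m ∈ elementsLE M x ↔ m ≠ 0 ∧ (norm m : ℝ) ≤ x := by
  simp [elementsLE]

@[simp]
theorem mem_primesLE {x : ℝ} {p : M} : p ∈ primesLE M x ↔ Prime p ∧ (norm p : ℝ) ≤ x := by
  simp only [primesLE, Finset.mem_filter, mem_elementsLE]
  exact ⟨fun h => ⟨h.2, h.1.2⟩, fun h => ⟨⟨h.1.ne_zero, h.2⟩, h.1⟩⟩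

theorem prime_of_mem_primesLE {x : ℝ} {p : M} (hp : p ∈ primesLE M x) : Prime p :=
  (mem_primesLE.mp hp).1

variable (M)

theorem elementsLE_mono : Monotone (elementsLE M) := fun x y hxy m hm => by
  rw [mem_elementsLE] at hm ⊢
  exact ⟨hm.1, hm.2.trans hxy⟩

theorem elementsLE_eq_empty {x : ℝ} (hx : x < 1) : elementsLE M x = ∅ := by
  refine Finset.eq_empty_of_forall_notMem fun m hm => ?_
  rw [mem_elementsLE] at hm
  linarith [one_le_norm hm.1, hm.2]

theorem card_elementsLE (x : ℝ) :
    (elementsLE M x).card = Nat.card {m : M // m ≠ 0 ∧ (norm m : ℝ) ≤ x} :=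
  (Nat.subtype_card _ fun _ => mem_elementsLE).symm

/-- The constant `κ` in the count `κ x` of elements of norm at most `x`. -/
def density : ℝ :=
  (exists_card_sub_isBigO (M := M)).choose

theorem density_pos : 0 < density M :=
  (exists_card_sub_isBigO (M := M)).choose_spec.1

theorem exists_abs_card_sub_le :
    ∃ C > 0, ∃ δ > (0 : ℝ), ∀ x : ℝ, 1 ≤ x →
      |((elementsLE M x).card : ℝ) - density M * x| ≤ C * x ^ (1 - δ) := by
  obtain ⟨δ, hδ, hbigO⟩ : ∃ δ > (0 : ℝ),
      (fun x : ℝ => ((elementsLE M x).card : ℝ) - density M * x) =O[atTop]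
        fun x => x ^ (1 - δ) := by
    simp only [card_elementsLE]
    exact (exists_card_sub_isBigO (M := M)).choose_spec.2
  obtain ⟨C, hC, hbound⟩ := hbigO.exists_pos
  obtain ⟨X, hX⟩ := eventually_atTop.mp hbound.bound
  set D : ℝ := ((elementsLE M X).card : ℝ) + density M * |X|
  have hD : 0 ≤ D := by have := density_pos M; positivity
  refine ⟨C + D, by positivity, min δ 1, by positivity, fun x hx => ?_⟩
  have hκ := density_pos M
  have hpow : x ^ (1 - δ) ≤ x ^ (1 - min δ 1) :=
    Real.rpow_le_rpow_of_exponent_le hx (sub_le_sub_left (min_le_left δ 1) 1)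
  rcases le_or_gt X x with hXx | hXx
  · have hx' := hX x hXx
    rw [Real.norm_eq_abs, Real.norm_of_nonneg (by positivity)] at hx'
    exact hx'.trans (mul_le_mul (le_add_of_nonneg_right hD) hpow (by positivity) (by positivity))
  · have hcard : ((elementsLE M x).card : ℝ) ≤ (elementsLE M X).card := by
      exact_mod_cast Finset.card_le_card (elementsLE_mono M hXx.le)
    have hmul : density M * x ≤ density M * |X| := by gcongr; exact hXx.le.trans (le_abs_self X)
    have hone : 1 ≤ x ^ (1 - min δ 1) := Real.one_le_rpow hx (by linarith [min_le_right δ 1])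
    calc |((elementsLE M x).card : ℝ) - density M * x| ≤ D := by
          rw [abs_le]
          constructor <;> linarith [mul_nonneg hκ.le (zero_le_one.trans hx),
            mul_nonneg hκ.le (abs_nonneg X), Nat.cast_nonneg (α := ℝ) (elementsLE M x).card]
      _ ≤ (C + D) * x ^ (1 - min δ 1) := by nlinarith

theorem exists_card_elementsLE_sub_le_rpow :
    ∃ C > 0, ∃ δ ∈ Set.Ioc (0 : ℝ) (1 / 4), ∀ x > 0, ∀ c ∈ Set.Icc 0 δ,
      |((elementsLE M x).card : ℝ) - density M * x| ≤ C * x ^ (1 - c) := by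
  obtain ⟨C, hC, δ, hδ, hbound⟩ := exists_abs_card_sub_le M
  have hκ := density_pos M
  refine ⟨C + density M, by positivity, min δ (1 / 4), ⟨by positivity, min_le_right _ _⟩,
    fun x hx c ⟨hc0, hc⟩ => ?_⟩
  rcases lt_or_ge x 1 with hx1 | hx1
  · have hpow : x ≤ x ^ (1 - c) := by
      simpa using Real.rpow_le_rpow_of_exponent_ge hx hx1.le (by linarith : 1 - c ≤ 1)
    rw [elementsLE_eq_empty M hx1, Finset.card_empty, Nat.cast_zero, zero_sub, abs_neg,
      abs_of_pos (by positivity)]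
    gcongr
    linarith
  · have hpow : x ^ (1 - δ) ≤ x ^ (1 - c) :=
      Real.rpow_le_rpow_of_exponent_le hx1 (sub_le_sub_left (hc.trans (min_le_left _ _)) 1)
    refine (hbound x hx1).trans ?_
    gcongr
    linarith

theorem exists_card_elementsLE_le : ∃ C > 0, ∀ x ≥ 0, ((elementsLE M x).card : ℝ) ≤ C * x := by
  obtain ⟨C, hC, δ, hδ, hbound⟩ := exists_card_elementsLE_sub_le_rpow M
  have hκ := density_pos M
  refine ⟨density M + C, by positivity, fun x hx => ?_⟩
  rcases hx.eq_or_lt with rfl | hx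
  · simp [elementsLE_eq_empty M zero_lt_one]
  · have h := hbound x hx 0 ⟨le_rfl, hδ.1.le⟩
    rw [sub_zero, Real.rpow_one] at h
    linarith [(abs_le.mp h).2]

end Basic

section NormSums

variable (M : Type*) [CommMonoidWithZero M] [ArithmeticSemigroup M]

theorem sum_comp_norm_eq_sum_card_mul_sub (w : ℕ → ℝ) (n : ℕ) :
    ∑ m ∈ elementsLE M n, w (norm m) = (elementsLE M n).card * w n +
      ∑ k ∈ Finset.range n, (elementsLE M k).card * (w k - w (k + 1)) := by
  classical
  induction n with
  | zero => simp [elementsLE_eq_empty]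
  | succ n ih =>
    have hsub : elementsLE M n ⊆ elementsLE M (n + 1 : ℕ) :=
      elementsLE_mono M (Nat.cast_le.mpr n.le_succ)
    have hnorm : ∀ m ∈ elementsLE M (n + 1 : ℕ) \ elementsLE M n, w (norm m) = w (n + 1) := by
      intro m hm
      simp only [Finset.mem_sdiff, mem_elementsLE, Nat.cast_le] at hm
      have : norm m = n + 1 := by grind
      rw [this]
    rw [← Finset.sum_sdiff hsub, Finset.sum_congr rfl hnorm, Finset.sum_const, nsmul_eq_mul,
      Finset.cast_card_sdiff hsub, ih, Finset.sum_range_succ]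
    ring

theorem sum_range_succ_eq_sum_mul_sub (w : ℕ → ℝ) (n : ℕ) :
    ∑ k ∈ Finset.range n, w (k + 1) =
      n * w n + ∑ k ∈ Finset.range n, k * (w k - w (k + 1)) := by
  induction n with
  | zero => simp
  | succ n ih =>
    rw [Finset.sum_range_succ, ih, Finset.sum_range_succ]
    push_cast
    ring

theorem exists_sum_comp_norm_le :
    ∃ C > 0, ∀ w : ℕ → ℝ, AntitoneOn w (Set.Ici 1) → (∀ n, 0 ≤ w n) → ∀ n : ℕ,
      ∑ m ∈ elementsLE M n, w (norm m) ≤ C * ∑ k ∈ Finset.range n, w (k + 1) := by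
  obtain ⟨C, hC, hcard⟩ := exists_card_elementsLE_le M
  refine ⟨C, hC, fun w hw hw0 n => ?_⟩
  rw [sum_comp_norm_eq_sum_card_mul_sub, sum_range_succ_eq_sum_mul_sub, mul_add, Finset.mul_sum,
    ← mul_assoc]
  refine add_le_add (mul_le_mul_of_nonneg_right (hcard n n.cast_nonneg) (hw0 n))
    (Finset.sum_le_sum fun k _ => ?_)
  rw [← mul_assoc]
  rcases k.eq_zero_or_pos with rfl | hk
  · simp [elementsLE_eq_empty]
  · exact mul_le_mul_of_nonneg_right (hcard k k.cast_nonneg)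
      (sub_nonneg.mpr (hw hk k.succ_pos k.le_succ))

/-- The zeta function `∑ N(m) ^ (-s)` of an arithmetical semigroup at a real number `s`; the zero
element contributes `0` when `s ≠ 0`. -/
def zeta (s : ℝ) : ℝ :=
  ∑' m : M, (norm m : ℝ) ^ (-s)

theorem exists_zeta_le :
    ∃ C > 0, ∀ s > 1, Summable (fun m : M => (norm m : ℝ) ^ (-s)) ∧
      zeta M s ≤ C * ∑' n : ℕ, 1 / (n : ℝ) ^ s := by
  obtain ⟨C, hC, hsum⟩ := exists_sum_comp_norm_le M
  refine ⟨C, hC, fun s hs => ?_⟩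
  have hanti : AntitoneOn (fun n : ℕ => (n : ℝ) ^ (-s)) (Set.Ici 1) := fun a ha b _ hab =>
    Real.rpow_le_rpow_of_nonpos (Nat.cast_pos.mpr ha) (Nat.cast_le.mpr hab) (by linarith)
  have hrange (n : ℕ) :
      ∑ k ∈ Finset.range n, ((k + 1 : ℕ) : ℝ) ^ (-s) ≤ ∑' n : ℕ, 1 / (n : ℝ) ^ s := by
    have hle := (Real.summable_one_div_nat_rpow.mpr hs).sum_le_tsum (Finset.range (n + 1))
      fun _ _ => by positivity
    rw [Finset.sum_range_succ'] at hle
    refine le_trans ?_ ((le_add_of_nonneg_right (by positivity)).trans hle)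
    exact (Finset.sum_congr rfl fun k _ => by rw [Real.rpow_neg (by positivity), one_div]).le
  have hbound (F : Finset M) :
      ∑ m ∈ F, (norm m : ℝ) ^ (-s) ≤ C * ∑' n : ℕ, 1 / (n : ℝ) ^ s := by
    have hsub : ∀ m ∈ F, m ∉ elementsLE M (F.sup norm : ℕ) → (norm m : ℝ) ^ (-s) = 0 := by
      intro m hm hm'
      have : m = 0 := by
        by_contra h0
        exact hm' (mem_elementsLE.mpr ⟨h0, Nat.cast_le.mpr (Finset.le_sup hm)⟩)
      rw [this, map_zero, Nat.cast_zero, Real.zero_rpow (by linarith)]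
    calc ∑ m ∈ F, (norm m : ℝ) ^ (-s)
        ≤ ∑ m ∈ elementsLE M (F.sup norm : ℕ), (norm m : ℝ) ^ (-s) := by
          classical
          rw [← Finset.sum_filter_add_sum_filter_not F (· ∈ elementsLE M (F.sup norm : ℕ)),
            Finset.sum_eq_zero (s := F.filter (· ∉ _)) fun m hm => hsub m
              (Finset.mem_filter.mp hm).1 (Finset.mem_filter.mp hm).2, add_zero]
          exact Finset.sum_le_sum_of_subset_of_nonneg
            (fun m hm => (Finset.mem_filter.mp hm).2) fun _ _ _ => by positivity
      _ ≤ C * ∑ k ∈ Finset.range (F.sup norm), ((k + 1 : ℕ) : ℝ) ^ (-s) :=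
          hsum _ hanti (fun _ => by positivity) _
      _ ≤ C * ∑' n : ℕ, 1 / (n : ℝ) ^ s := by gcongr; exact hrange _
  exact ⟨summable_of_sum_le (fun _ => by positivity) hbound,
    Real.tsum_le_of_sum_le (fun _ => by positivity) hbound⟩

theorem summable_norm_rpow_neg {s : ℝ} (hs : 1 < s) :
    Summable fun m : M => (norm m : ℝ) ^ (-s) :=
  have ⟨_, _, h⟩ := exists_zeta_le M
  (h s hs).1

theorem sum_norm_rpow_neg_le_zeta {s : ℝ} (hs : 1 < s) (F : Finset M) :
    ∑ m ∈ F, (norm m : ℝ) ^ (-s) ≤ zeta M s :=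
  (summable_norm_rpow_neg M hs).sum_le_tsum F fun _ _ => by positivity

theorem zeta_nonneg (s : ℝ) : 0 ≤ zeta M s :=
  tsum_nonneg fun _ => by positivity

theorem exists_eventually_zeta_le_div : ∃ C > 0, ∀ᶠ s in 𝓝[>] (1 : ℝ), zeta M s ≤ C / (s - 1) := by
  obtain ⟨C, hC, hzeta⟩ := exists_zeta_le M
  refine ⟨C * 2, by positivity, ?_⟩
  filter_upwards [tendsto_sub_mul_tsum_nat_rpow.eventually_le_const one_lt_two,
    self_mem_nhdsWithin] with s hs2 hs
  rw [le_div_iff₀ (sub_pos.mpr hs)]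
  calc zeta M s * (s - 1) ≤ C * (∑' n : ℕ, 1 / (n : ℝ) ^ s) * (s - 1) :=
        mul_le_mul_of_nonneg_right (hzeta s hs).2 (sub_pos.mpr hs).le
    _ = C * ((s - 1) * ∑' n : ℕ, 1 / (n : ℝ) ^ s) := by ring
    _ ≤ C * 2 := by gcongr

theorem rpow_one_sub_mul_abs_inv_sub_inv_succ_le {δ : ℝ} (hδ : δ < 1) (k : ℕ) :
    (k : ℝ) ^ (1 - δ) * |(k : ℝ)⁻¹ - ((k + 1 : ℕ) : ℝ)⁻¹| ≤ 1 / (k : ℝ) ^ (1 + δ) := by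
  rcases k.eq_zero_or_pos with rfl | hk
  · rw [Nat.cast_zero, Real.zero_rpow (sub_pos.mpr hδ).ne', zero_mul]
    positivity
  · have hk0 : (0 : ℝ) < k := Nat.cast_pos.mpr hk
    calc (k : ℝ) ^ (1 - δ) * |(k : ℝ)⁻¹ - ((k + 1 : ℕ) : ℝ)⁻¹|
        ≤ (k : ℝ) ^ (1 - δ) * ((k : ℝ) ^ (2 : ℝ))⁻¹ := by
          rw [Nat.cast_add_one, inv_sub_inv hk0.ne' (by positivity), add_sub_cancel_left,
            abs_of_pos (by positivity), one_div, Real.rpow_two]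
          gcongr
          nlinarith
      _ = 1 / (k : ℝ) ^ (1 + δ) := by
          rw [one_div, ← Real.rpow_neg hk0.le, ← Real.rpow_neg hk0.le, ← Real.rpow_add hk0]
          ring_nf

theorem sum_comp_norm_sub_density_mul_sum_range (w : ℕ → ℝ) (n : ℕ) :
    ∑ m ∈ elementsLE M n, w (norm m) - density M * ∑ k ∈ Finset.range n, w (k + 1) =
      ((elementsLE M n).card - density M * n) * w n +
        ∑ k ∈ Finset.range n, ((elementsLE M k).card - density M * k) * (w k - w (k + 1)) := by
  rw [sum_comp_norm_eq_sum_card_mul_sub, sum_range_succ_eq_sum_mul_sub, mul_add, Finset.mul_sum,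
    add_sub_add_comm, ← Finset.sum_sub_distrib]
  congr 1
  · ring
  · exact Finset.sum_congr rfl fun k _ => by ring

theorem exists_abs_sum_inv_norm_sub_le :
    ∃ C, ∀ n : ℕ, |∑ m ∈ elementsLE M n, (norm m : ℝ)⁻¹ -
      density M * ∑ k ∈ Finset.range n, ((k + 1 : ℕ) : ℝ)⁻¹| ≤ C := by
  obtain ⟨C, hC, δ, ⟨hδ, hδ'⟩, hcard⟩ := exists_card_elementsLE_sub_le_rpow M
  have herror (k : ℕ) : |((elementsLE M k).card : ℝ) - density M * k| ≤ C * (k : ℝ) ^ (1 - δ) := by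
    rcases k.eq_zero_or_pos with rfl | hk
    · rw [Nat.cast_zero, elementsLE_eq_empty M zero_lt_one, Finset.card_empty, Nat.cast_zero,
        mul_zero, sub_zero, abs_zero]
      positivity
    · exact hcard k (Nat.cast_pos.mpr hk) δ ⟨hδ.le, le_rfl⟩
  have hlast (n : ℕ) : (n : ℝ) ^ (1 - δ) * |(n : ℝ)⁻¹| ≤ 1 := by
    rcases n.eq_zero_or_pos with rfl | hn
    · simp
    · have hn1 : (1 : ℝ) ≤ n := Nat.one_le_cast.mpr hn
      rw [abs_of_nonneg (by positivity), ← div_eq_mul_inv]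
      refine div_le_one_of_le₀ ?_ (by positivity)
      simpa using Real.rpow_le_rpow_of_exponent_le hn1 (by linarith : 1 - δ ≤ 1)
  have hsummable : Summable fun k : ℕ => 1 / (k : ℝ) ^ (1 + δ) :=
    Real.summable_one_div_nat_rpow.mpr (lt_add_of_pos_right 1 hδ)
  refine ⟨C * 1 + C * ∑' k : ℕ, 1 / (k : ℝ) ^ (1 + δ), fun n => ?_⟩
  rw [sum_comp_norm_sub_density_mul_sum_range M fun k => (k : ℝ)⁻¹]
  refine (abs_add_le _ _).trans (add_le_add ?_ ((Finset.abs_sum_le_sum_abs _ _).trans ?_))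
  · rw [abs_mul]
    calc _ ≤ C * (n : ℝ) ^ (1 - δ) * |(n : ℝ)⁻¹| := by gcongr; exact herror n
      _ ≤ C * 1 := by rw [mul_assoc]; gcongr; exact hlast n
  · calc _ ≤ ∑ k ∈ Finset.range n, C * (1 / (k : ℝ) ^ (1 + δ)) := by
          refine Finset.sum_le_sum fun k _ => ?_
          rw [abs_mul]
          refine (mul_le_mul_of_nonneg_right (herror k) (abs_nonneg _)).trans ?_
          rw [mul_assoc]
          gcongr
          exact rpow_one_sub_mul_abs_inv_sub_inv_succ_le (by linarith) k
      _ ≤ C * ∑' k : ℕ, 1 / (k : ℝ) ^ (1 + δ) := by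
          rw [← Finset.mul_sum]
          gcongr
          exact hsummable.sum_le_tsum _ fun _ _ => by positivity

theorem exists_density_mul_log_sub_le_sum_inv_norm :
    ∃ C, ∀ x ≥ 1, density M * Real.log x - C ≤ ∑ m ∈ elementsLE M x, (norm m : ℝ)⁻¹ := by
  obtain ⟨C, hC⟩ := exists_abs_sum_inv_norm_sub_le M
  refine ⟨C, fun x hx => ?_⟩
  have hlog : Real.log x ≤ ∑ k ∈ Finset.range ⌊x⌋₊, ((k + 1 : ℕ) : ℝ)⁻¹ := by
    calc Real.log x ≤ Real.log (⌊x⌋₊ + 1 : ℕ) :=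
          Real.log_le_log (by positivity) (by exact_mod_cast (Nat.lt_floor_add_one x).le)
      _ ≤ harmonic ⌊x⌋₊ := by exact_mod_cast log_add_one_le_harmonic ⌊x⌋₊
      _ = _ := by simp [harmonic]
  calc density M * Real.log x - C
      ≤ density M * ∑ k ∈ Finset.range ⌊x⌋₊, ((k + 1 : ℕ) : ℝ)⁻¹ - C := by
        have := density_pos M
        gcongr
    _ ≤ ∑ m ∈ elementsLE M ⌊x⌋₊, (norm m : ℝ)⁻¹ := by linarith [(abs_le.mp (hC ⌊x⌋₊)).1]
    _ ≤ ∑ m ∈ elementsLE M x, (norm m : ℝ)⁻¹ :=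
        Finset.sum_le_sum_of_subset_of_nonneg (elementsLE_mono M (Nat.floor_le (by positivity)))
          fun _ _ _ => by positivity

end NormSums

/-! ### Mertens estimates -/

section EulerProduct

variable {M : Type*} [CommMonoidWithZero M] [ArithmeticSemigroup M]

theorem eq_one_of_forall_prime_not_dvd {m : M} (hm : m ≠ 0) (h : ∀ p, Prime p → ¬ p ∣ m) :
    m = 1 := by
  by_contra h1
  obtain ⟨p, hp, hpm⟩ := WfDvdMonoid.exists_irreducible_factor (mt isUnit_iff_eq_one.mp h1) hm
  exact h p hp.prime hpm

theorem exists_subset_image_pow_mul [DecidableEq M] {p : M} (hp : Prime p) (P F : Finset M)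
    (hF : ∀ m ∈ F, m ≠ 0 ∧ ∀ q, Prime q → q ∣ m → q ∈ insert p P) :
    ∃ (J : ℕ) (G : Finset M), (∀ c ∈ G, c ≠ 0 ∧ ∀ q, Prime q → q ∣ c → q ∈ P) ∧
      F ⊆ (Finset.range J ×ˢ G).image fun kc => p ^ kc.1 * kc.2 := by
  have hdecomp (m : F) : ∃ k c, (m : M) = p ^ k * c ∧ ¬ p ∣ c :=
    ⟨_, (FiniteMultiplicity.of_prime_left hp (hF m m.2).1).exists_eq_pow_mul_and_not_dvd⟩
  choose k c hm hc using hdecomp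
  refine ⟨Finset.univ.sup k + 1, Finset.univ.image c, fun d hd => ?_, fun m hmF => ?_⟩
  · obtain ⟨m, -, rfl⟩ := Finset.mem_image.mp hd
    refine ⟨fun h0 => hc m (h0 ▸ dvd_zero p), fun q hq hqc => ?_⟩
    refine Finset.mem_of_mem_insert_of_ne ((hF m m.2).2 q hq (hm m ▸ hqc.mul_left _)) ?_
    rintro rfl
    exact hc m hqc
  · exact Finset.mem_image.mpr ⟨(k ⟨m, hmF⟩, c ⟨m, hmF⟩), Finset.mem_product.mpr
      ⟨Finset.mem_range_succ_iff.mpr (Finset.le_sup (f := k) (Finset.mem_univ _)),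
        Finset.mem_image_of_mem _ (Finset.mem_univ _)⟩, (hm ⟨m, hmF⟩).symm⟩

theorem sum_le_prod_inv_one_sub {f : M →* ℝ} (hf : ∀ m, 0 ≤ f m) {P : Finset M}
    (hP : ∀ p ∈ P, Prime p ∧ f p < 1) {F : Finset M}
    (hF : ∀ m ∈ F, m ≠ 0 ∧ ∀ p, Prime p → p ∣ m → p ∈ P) :
    ∑ m ∈ F, f m ≤ ∏ p ∈ P, (1 - f p)⁻¹ := by
  classical
  induction P using Finset.induction_on generalizing F with
  | empty =>
    have hsub : F ⊆ {1} := fun m hm => Finset.mem_singleton.mpr <|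
      eq_one_of_forall_prime_not_dvd (hF m hm).1 fun p hp hpm =>
        Finset.notMem_empty p ((hF m hm).2 p hp hpm)
    simpa using Finset.sum_le_sum_of_subset_of_nonneg hsub fun m _ _ => hf m
  | insert p P hpP ih =>
    obtain ⟨hp, hp1⟩ := hP p (Finset.mem_insert_self _ _)
    obtain ⟨J, G, hG, hFG⟩ := exists_subset_image_pow_mul hp P F hF
    have hgeom : ∑ k ∈ Finset.range J, f p ^ k ≤ (1 - f p)⁻¹ := by
      rw [← tsum_geometric_of_lt_one (hf p) hp1]
      exact (summable_geometric_of_lt_one (hf p) hp1).sum_le_tsum _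
        fun k _ => pow_nonneg (hf p) k
    calc ∑ m ∈ F, f m
        ≤ ∑ m ∈ (Finset.range J ×ˢ G).image fun kc => p ^ kc.1 * kc.2, f m :=
          Finset.sum_le_sum_of_subset_of_nonneg hFG fun m _ _ => hf m
      _ ≤ ∑ kc ∈ Finset.range J ×ˢ G, f (p ^ kc.1 * kc.2) :=
          Finset.sum_image_le_of_nonneg fun _ _ => hf _
      _ = (∑ k ∈ Finset.range J, f p ^ k) * ∑ c ∈ G, f c := by
          simp_rw [Finset.sum_product, map_mul, map_pow, Finset.sum_mul_sum]
      _ ≤ (1 - f p)⁻¹ * ∏ q ∈ P, (1 - f q)⁻¹ :=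
          mul_le_mul hgeom (ih (fun q hq => hP q (Finset.mem_insert_of_mem hq)) hG)
            (Finset.sum_nonneg fun _ _ => hf _) (inv_nonneg.mpr (sub_pos.mpr hp1).le)
      _ = ∏ q ∈ insert p P, (1 - f q)⁻¹ := by rw [Finset.prod_insert hpP]

theorem prime_dvd_prod_primes_iff {p : M} (hp : Prime p) {A : Finset M}
    (hA : ∀ q ∈ A, Prime q) : p ∣ ∏ q ∈ A, q ↔ p ∈ A := by
  refine ⟨fun h => ?_, Finset.dvd_prod_of_mem _⟩
  obtain ⟨q, hq, hpq⟩ := hp.exists_mem_finset_dvd h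
  rwa [eq_of_prime_dvd_prime hp (hA q hq) hpq]

theorem injOn_prod_primes {P : Finset M} (hP : ∀ p ∈ P, Prime p) :
    Set.InjOn (fun A : Finset M => ∏ p ∈ A, p) P.powerset := by
  intro A hA B hB hAB
  rw [Finset.mem_coe, Finset.mem_powerset] at hA hB
  have hdvd {p : M} (hp : p ∈ P) : p ∈ A ↔ p ∈ B := by
    rw [← prime_dvd_prod_primes_iff (hP p hp) fun q hq => hP q (hA hq),
      ← prime_dvd_prod_primes_iff (hP p hp) fun q hq => hP q (hB hq)]
    exact iff_of_eq (congrArg (p ∣ ·) hAB)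
  exact Finset.Subset.antisymm (fun p hp => (hdvd (hA hp)).mp hp)
    fun p hp => (hdvd (hB hp)).mpr hp

theorem exists_prod_one_add_eq_sum (f : M →* ℝ) {P : Finset M} (hP : ∀ p ∈ P, Prime p) :
    ∃ F : Finset M, ∏ p ∈ P, (1 + f p) = ∑ m ∈ F, f m := by
  classical
  refine ⟨P.powerset.image fun A => ∏ p ∈ A, p, ?_⟩
  rw [Finset.prod_one_add, Finset.sum_image (injOn_prod_primes hP)]
  simp_rw [map_prod]

end EulerProduct

section Mertens

variable (M : Type*) [CommMonoidWithZero M] [ArithmeticSemigroup M]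

/-- The sum `∑ 1 / N(p)` over the primes of norm at most `x`. -/
def mertensSum (x : ℝ) : ℝ :=
  ∑ p ∈ primesLE M x, (norm p : ℝ)⁻¹

/-- The completely multiplicative function `N(m) ^ (-s)`. -/
def normRpowNeg (s : ℝ) : M →* ℝ where
  toFun m := (norm m : ℝ) ^ (-s)
  map_one' := by simp
  map_mul' m n := by rw [map_mul, Nat.cast_mul, Real.mul_rpow (by positivity) (by positivity)]

variable {M}

theorem normRpowNeg_apply (s : ℝ) (m : M) : normRpowNeg M s m = (norm m : ℝ) ^ (-s) :=
  rfl

theorem inv_norm_le_half {p : M} (hp : Prime p) : (norm p : ℝ)⁻¹ ≤ 1 / 2 := by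
  rw [one_div]
  exact inv_anti₀ two_pos (two_le_norm_of_prime hp)

variable (M)

theorem sum_inv_norm_sq_le_zeta_two (F : Finset M) :
    ∑ m ∈ F, ((norm m : ℝ)⁻¹) ^ 2 ≤ zeta M 2 := by
  refine le_of_eq_of_le ?_ (sum_norm_rpow_neg_le_zeta M one_lt_two F)
  refine Finset.sum_congr rfl fun m _ => ?_
  rw [Real.rpow_neg (by positivity), Real.rpow_two, inv_pow]

theorem inv_one_sub_le_exp {u : ℝ} (hu : u ≤ 1 / 2) :
    (1 - u)⁻¹ ≤ Real.exp (u + 2 * u ^ 2) := by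
  have hpos : 0 < 1 - u := by linarith
  calc (1 - u)⁻¹ ≤ 1 + (u + 2 * u ^ 2) := by
        rw [inv_le_iff_one_le_mul₀ hpos]
        nlinarith [mul_nonneg (sq_nonneg u) (by linarith : 0 ≤ 1 - 2 * u)]
    _ ≤ Real.exp (u + 2 * u ^ 2) := by linarith [Real.add_one_le_exp (u + 2 * u ^ 2)]

theorem exp_sub_sq_le_one_add {v : ℝ} (hv : 0 ≤ v) : Real.exp (v - v ^ 2) ≤ 1 + v := by
  have hpos : 0 < 1 + v := by linarith
  rw [← Real.le_log_iff_exp_le hpos]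
  refine le_trans ?_ (Real.one_sub_inv_le_log_of_pos hpos)
  rw [le_sub_comm, inv_le_iff_one_le_mul₀ hpos]
  nlinarith [pow_nonneg hv 3]

theorem sum_inv_norm_le_exp_mertensSum (x : ℝ) :
    ∑ m ∈ elementsLE M x, (norm m : ℝ)⁻¹ ≤ Real.exp (mertensSum M x + 2 * zeta M 2) := by
  have heuler : ∑ m ∈ elementsLE M x, (norm m : ℝ)⁻¹ ≤
      ∏ p ∈ primesLE M x, (1 - (norm p : ℝ)⁻¹)⁻¹ := by
    simpa only [normRpowNeg_apply, Real.rpow_neg_one] using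
      sum_le_prod_inv_one_sub (f := normRpowNeg M 1) (P := primesLE M x) (F := elementsLE M x)
        (fun m => by rw [normRpowNeg_apply]; positivity)
        (fun p hp => ⟨prime_of_mem_primesLE hp, by
          rw [normRpowNeg_apply, Real.rpow_neg_one]
          linarith [inv_norm_le_half (prime_of_mem_primesLE hp)]⟩)
        fun m hm => ⟨(mem_elementsLE.mp hm).1, fun p hp hpm => mem_primesLE.mpr
          ⟨hp, (norm_le_of_dvd (mem_elementsLE.mp hm).1 hpm).trans (mem_elementsLE.mp hm).2⟩⟩
  calc ∑ m ∈ elementsLE M x, (norm m : ℝ)⁻¹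
      ≤ ∏ p ∈ primesLE M x, (1 - (norm p : ℝ)⁻¹)⁻¹ := heuler
    _ ≤ ∏ p ∈ primesLE M x, Real.exp ((norm p : ℝ)⁻¹ + 2 * ((norm p : ℝ)⁻¹) ^ 2) :=
        Finset.prod_le_prod
          (fun p hp => inv_nonneg.mpr (by linarith [inv_norm_le_half (prime_of_mem_primesLE hp)]))
          fun p hp => inv_one_sub_le_exp
            (inv_norm_le_half (prime_of_mem_primesLE hp))
    _ = Real.exp (mertensSum M x + 2 * ∑ p ∈ primesLE M x, ((norm p : ℝ)⁻¹) ^ 2) := by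
        rw [← Real.exp_sum, Finset.sum_add_distrib, Finset.mul_sum, mertensSum]
    _ ≤ Real.exp (mertensSum M x + 2 * zeta M 2) := by
        gcongr
        exact sum_inv_norm_sq_le_zeta_two M _

theorem exists_eventually_log_log_sub_le_mertensSum :
    ∃ C, ∀ᶠ x in atTop, Real.log (Real.log x) - C ≤ mertensSum M x := by
  obtain ⟨C, hC⟩ := exists_density_mul_log_sub_le_sum_inv_norm M
  have hκ := density_pos M
  refine ⟨2 * zeta M 2 - Real.log (density M / 2), ?_⟩
  filter_upwards [eventually_ge_atTop 1, Real.tendsto_log_atTop.eventually_gt_atTop 0,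
    Real.tendsto_log_atTop.eventually_ge_atTop (2 * C / density M)] with x hx hlog hlogC
  have hexp : density M / 2 * Real.log x ≤ Real.exp (mertensSum M x + 2 * zeta M 2) := by
    rw [div_le_iff₀ hκ] at hlogC
    linarith [hC x hx, sum_inv_norm_le_exp_mertensSum M x]
  have := Real.log_le_log (by positivity) hexp
  rw [Real.log_exp, Real.log_mul (by positivity) (by positivity)] at this
  linarith

theorem exp_sum_primesLE_rpow_neg_sub_le_zeta {s : ℝ} (hs : 1 < s) (x : ℝ) :
    Real.exp (∑ p ∈ primesLE M x, (norm p : ℝ) ^ (-s) - zeta M 2) ≤ zeta M s := by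
  obtain ⟨F, hF⟩ := exists_prod_one_add_eq_sum (normRpowNeg M s) (P := primesLE M x)
    fun p hp => prime_of_mem_primesLE hp
  calc Real.exp (∑ p ∈ primesLE M x, (norm p : ℝ) ^ (-s) - zeta M 2)
      ≤ Real.exp (∑ p ∈ primesLE M x, ((norm p : ℝ) ^ (-s) - ((norm p : ℝ) ^ (-s)) ^ 2)) := by
        rw [Finset.sum_sub_distrib]
        gcongr
        refine (Finset.sum_le_sum fun p hp => ?_).trans
          (sum_inv_norm_sq_le_zeta_two M (primesLE M x))
        gcongr
        rw [← Real.rpow_neg_one]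
        exact Real.rpow_le_rpow_of_exponent_le
          (one_le_norm (prime_of_mem_primesLE hp).ne_zero) (neg_le_neg hs.le)
    _ ≤ ∏ p ∈ primesLE M x, (1 + (norm p : ℝ) ^ (-s)) := by
        rw [Real.exp_sum]
        exact Finset.prod_le_prod (fun _ _ => (Real.exp_pos _).le)
          fun p _ => exp_sub_sq_le_one_add (by positivity)
    _ = ∑ m ∈ F, (norm m : ℝ) ^ (-s) := hF
    _ ≤ zeta M s := sum_norm_rpow_neg_le_zeta M hs F

theorem mertensSum_le_rpow_mul_sum (u x : ℝ) (hu : 0 ≤ u) :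
    mertensSum M x ≤ x ^ u * ∑ p ∈ primesLE M x, (norm p : ℝ) ^ (-(1 + u)) := by
  rw [mertensSum, Finset.mul_sum]
  refine Finset.sum_le_sum fun p hp => ?_
  have hp0 : (0 : ℝ) < norm p := two_pos.trans_le (two_le_norm_of_prime (prime_of_mem_primesLE hp))
  calc (norm p : ℝ)⁻¹ = (norm p : ℝ) ^ u * (norm p : ℝ) ^ (-(1 + u)) := by
        rw [← Real.rpow_add hp0, ← Real.rpow_neg_one]
        ring_nf
    _ ≤ x ^ u * (norm p : ℝ) ^ (-(1 + u)) := by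
        gcongr
        exact (mem_primesLE.mp hp).2

theorem exp_inv_mul_le {L D : ℝ} (hL : 1 ≤ L) (hD : 0 ≤ D) :
    Real.exp L⁻¹ * (L + Real.log L + D) ≤ L + Real.log L + (4 + 3 * D) := by
  have hinv : L⁻¹ ≤ 1 := inv_le_one_of_one_le₀ hL
  have hlog0 : 0 ≤ Real.log L := Real.log_nonneg hL
  have hexp : Real.exp L⁻¹ ≤ 1 + 2 * L⁻¹ := by
    have := Real.abs_exp_sub_one_sub_id_le (x := L⁻¹) (by rwa [abs_of_pos (by positivity)])
    nlinarith [(abs_le.mp this).2, show 0 < L⁻¹ by positivity]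
  calc Real.exp L⁻¹ * (L + Real.log L + D)
      ≤ (1 + 2 * L⁻¹) * (L + Real.log L + D) := by gcongr
    _ = L + Real.log L + D + 2 * (L⁻¹ * L) + 2 * (L⁻¹ * Real.log L) + 2 * (L⁻¹ * D) := by ring
    _ ≤ L + Real.log L + D + 2 * (L⁻¹ * L) + 2 * (L⁻¹ * L) + 2 * (1 * D) := by
        gcongr
        exact Real.log_le_self (by positivity)
    _ = L + Real.log L + (4 + 3 * D) := by rw [inv_mul_cancel₀ (by positivity)]; ring

theorem exists_eventually_mertensSum_le :
    ∃ C, ∀ᶠ x in atTop, mertensSum M x ≤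
      Real.log (Real.log x) + Real.log (Real.log (Real.log x)) + C := by
  obtain ⟨C, hC, hzeta⟩ := exists_eventually_zeta_le_div M
  have hloglog : Tendsto (fun x => Real.log (Real.log x)) atTop atTop :=
    Real.tendsto_log_atTop.comp Real.tendsto_log_atTop
  -- Evaluate the zeta function at `1 + u`, `u = (log log x * log x)⁻¹`:
  -- then `x ^ u` is `1 + O(1 / log log x)`.
  have hlim : Tendsto (fun x => 1 + (Real.log (Real.log x) * Real.log x)⁻¹) atTop (𝓝[>] 1) := by
    refine tendsto_nhdsWithin_iff.mpr ⟨?_, ?_⟩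
    · simpa only [add_zero, Function.comp_def] using (tendsto_inv_atTop_zero.comp
        (hloglog.atTop_mul_atTop₀ Real.tendsto_log_atTop)).const_add 1
    · filter_upwards [hloglog.eventually_gt_atTop 0,
        Real.tendsto_log_atTop.eventually_gt_atTop 0] with x hL hl
      exact lt_add_of_pos_right 1 (inv_pos.mpr (mul_pos hL hl))
  set D := |Real.log C| + zeta M 2
  refine ⟨4 + 3 * D, ?_⟩
  filter_upwards [hlim.eventually hzeta, eventually_gt_atTop 0, hloglog.eventually_ge_atTop 1,
    Real.tendsto_log_atTop.eventually_gt_atTop 0] with x hx hx0 hL hl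
  set l := Real.log x with hl_def
  set L := Real.log l
  set V := ∑ p ∈ primesLE M x, (norm p : ℝ) ^ (-(1 + (L * l)⁻¹))
  have hpow : x ^ (L * l)⁻¹ = Real.exp L⁻¹ := by
    rw [Real.rpow_def_of_pos hx0, ← hl_def]
    congr 1
    field_simp
  have hV : V ≤ L + Real.log L + D := by
    have hexp : Real.exp (V - zeta M 2) ≤ C * (L * l) := by
      rw [add_sub_cancel_left, div_inv_eq_mul] at hx
      exact (exp_sum_primesLE_rpow_neg_sub_le_zeta M
        (lt_add_of_pos_right 1 (by positivity)) x).trans hx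
    have := Real.log_le_log (Real.exp_pos _) hexp
    rw [Real.log_exp, Real.log_mul hC.ne' (by positivity), Real.log_mul (by positivity) hl.ne']
      at this
    linarith [le_abs_self (Real.log C)]
  calc mertensSum M x ≤ x ^ (L * l)⁻¹ * V := mertensSum_le_rpow_mul_sum M _ _ (by positivity)
    _ ≤ Real.exp L⁻¹ * (L + Real.log L + D) := by rw [hpow]; gcongr
    _ ≤ L + Real.log L + (4 + 3 * D) := exp_inv_mul_le hL (by have := zeta_nonneg M 2; positivity)

end Mertens

/-! ### Sieving `h`-free elements -/

section LocalFactors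

variable {M : Type*} [CommMonoidWithZero M] [ArithmeticSemigroup M]

theorem mul_pow_dvd_iff {p d : M} (hp : Prime p) (hpd : ¬ p ∣ d) (k : ℕ) (m : M) :
    d * p ^ k ∣ m ↔ d ∣ m ∧ p ^ k ∣ m := by
  refine ⟨fun h => ⟨(dvd_mul_right _ _).trans h, (dvd_mul_left _ _).trans h⟩, fun ⟨hd, hpm⟩ => ?_⟩
  have hrel : IsRelPrime p d := hp.irreducible.isRelPrime_iff_not_dvd.mpr hpd
  exact hrel.symm.pow_right.mul_dvd hd hpm

open scoped Classical in
/-- The set of nonzero multiples of `d` of norm at most `x`. -/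
def multiplesLE (x : ℝ) (d : M) : Finset M :=
  {m ∈ elementsLE M x | d ∣ m}

theorem mem_multiplesLE {x : ℝ} {d m : M} :
    m ∈ multiplesLE x d ↔ (m ≠ 0 ∧ (norm m : ℝ) ≤ x) ∧ d ∣ m := by
  simp only [multiplesLE, Finset.mem_filter, mem_elementsLE]

theorem card_multiplesLE (x : ℝ) {d : M} (hd : d ≠ 0) :
    (multiplesLE x d).card = (elementsLE M (x / norm d)).card := by
  have hd0 : (0 : ℝ) < norm d := Nat.cast_pos.mpr (norm_pos hd)
  symm
  refine Finset.card_bij (fun m _ => d * m) (fun m hm => ?_) (fun a _ b _ => mul_left_cancel₀ hd)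
    fun m hm => ?_
  · rw [mem_elementsLE, le_div_iff₀' hd0] at hm
    rw [mem_multiplesLE, map_mul, Nat.cast_mul]
    exact ⟨⟨mul_ne_zero hd hm.1, hm.2⟩, dvd_mul_right _ _⟩
  · obtain ⟨hm, c, rfl⟩ := mem_multiplesLE.mp hm
    rw [map_mul, Nat.cast_mul, ← le_div_iff₀' hd0] at hm
    exact ⟨c, mem_elementsLE.mpr ⟨right_ne_zero_of_mul hm.1, hm.2⟩, rfl⟩

open scoped Classical in
/-- The function `1 + a [p ∣ m] + b [p ^ h ∣ m]` of `m`. A product of such functions over primes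
has expected value close to the product of the factors `1 + a N(p)⁻¹ + b N(p)⁻ʰ`. -/
def localFactor (a b : ℂ) (h : ℕ) (p m : M) : ℂ :=
  1 + a * (if p ∣ m then 1 else 0) + b * (if p ^ h ∣ m then 1 else 0)

theorem sum_multiplesLE_localFactor_mul {p d : M} (hp : Prime p) (hpd : ¬ p ∣ d) (a b : ℂ) (h : ℕ)
    (x : ℝ) (f : M → ℂ) :
    ∑ m ∈ multiplesLE x d, localFactor a b h p m * f m =
      ∑ m ∈ multiplesLE x d, f m + a * ∑ m ∈ multiplesLE x (d * p), f m +
        b * ∑ m ∈ multiplesLE x (d * p ^ h), f m := by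
  classical
  have hfilter (k : ℕ) : ∑ m ∈ multiplesLE x (d * p ^ k), f m =
      ∑ m ∈ multiplesLE x d, (if p ^ k ∣ m then 1 else 0) * f m := by
    simp only [multiplesLE, mul_pow_dvd_iff hp hpd, ← Finset.filter_filter, ite_mul, one_mul,
      zero_mul, Finset.sum_filter]
  have hfilter_one := hfilter 1
  simp only [pow_one] at hfilter_one
  rw [hfilter_one, hfilter h, Finset.mul_sum, Finset.mul_sum, ← Finset.sum_add_distrib,
    ← Finset.sum_add_distrib]
  exact Finset.sum_congr rfl fun m _ => by rw [localFactor]; ring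

theorem not_dvd_mul_pow {p q d : M} (hp : Prime p) (hq : Prime q) (hqp : q ≠ p) (hqd : ¬ q ∣ d)
    (k : ℕ) : ¬ q ∣ d * p ^ k := fun h =>
  (hq.dvd_or_dvd h).elim hqd fun h => hqp (eq_of_prime_dvd_prime hq hp (hq.dvd_of_dvd_pow h))

theorem norm_add_mul_add_mul_sub_le {R : Type*} [NormedField R] (a b : R)
    {s₀ s₁ s₂ z₀ z₁ z₂ : R} {ε₀ ε₁ ε₂ : ℝ}
    (h₀ : ‖s₀ - z₀‖ ≤ ε₀) (h₁ : ‖s₁ - z₁‖ ≤ ε₁) (h₂ : ‖s₂ - z₂‖ ≤ ε₂) :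
    ‖s₀ + a * s₁ + b * s₂ - (z₀ + a * z₁ + b * z₂)‖ ≤ ε₀ + ‖a‖ * ε₁ + ‖b‖ * ε₂ := by
  calc ‖s₀ + a * s₁ + b * s₂ - (z₀ + a * z₁ + b * z₂)‖
      = ‖(s₀ - z₀) + a * (s₁ - z₁) + b * (s₂ - z₂)‖ := by ring_nf
    _ ≤ ‖s₀ - z₀‖ + ‖a‖ * ‖s₁ - z₁‖ + ‖b‖ * ‖s₂ - z₂‖ := by
      rw [← norm_mul, ← norm_mul]
      exact norm_add₃_le
    _ ≤ ε₀ + ‖a‖ * ε₁ + ‖b‖ * ε₂ := by gcongr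

theorem norm_sum_prod_localFactor_sub_le {C c : ℝ} (hcount : ∀ y > 0,
      |((elementsLE M y).card : ℝ) - density M * y| ≤ C * y ^ (1 - c))
    (a b : ℂ) (h : ℕ) {x : ℝ} (hx : 0 < x) {P : Finset M} (hP : ∀ p ∈ P, Prime p)
    {d : M} (hd : d ≠ 0) (hPd : ∀ p ∈ P, ¬ p ∣ d) :
    ‖∑ m ∈ multiplesLE x d, ∏ p ∈ P, localFactor a b h p m -
        (density M * (x / norm d) : ℝ) *
          ∏ p ∈ P, (1 + a * ((norm p : ℝ)⁻¹ : ℝ) + b * (((norm p : ℝ)⁻¹) ^ h : ℝ))‖ ≤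
      C * (x / norm d) ^ (1 - c) * ∏ p ∈ P,
        (1 + ‖a‖ * ((norm p : ℝ)⁻¹) ^ (1 - c) + ‖b‖ * (((norm p : ℝ)⁻¹) ^ h) ^ (1 - c)) := by
  classical
  induction P using Finset.induction_on generalizing d with
  | empty =>
    have hd0 : (0 : ℝ) < norm d := Nat.cast_pos.mpr (norm_pos hd)
    simp only [Finset.prod_empty, mul_one, Finset.sum_const, nsmul_eq_mul, card_multiplesLE x hd]
    rw [← Complex.ofReal_natCast, ← Complex.ofReal_sub, Complex.norm_real]
    exact hcount (x / norm d) (by positivity)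
  | insert p P hpP ih =>
    rw [Finset.forall_mem_insert] at hP hPd
    obtain ⟨hp, hP⟩ := hP
    obtain ⟨hpd, hPd⟩ := hPd
    set u := (norm p : ℝ)⁻¹ with hu
    set X := x / norm d with hX
    have hX0 : 0 ≤ X := by positivity
    set A := ∏ q ∈ P, (1 + a * ((norm q : ℝ)⁻¹ : ℝ) + b * (((norm q : ℝ)⁻¹) ^ h : ℝ))
    set B := ∏ q ∈ P,
      (1 + ‖a‖ * ((norm q : ℝ)⁻¹) ^ (1 - c) + ‖b‖ * (((norm q : ℝ)⁻¹) ^ h) ^ (1 - c))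
    have ih_pow (k : ℕ) : ‖∑ m ∈ multiplesLE x (d * p ^ k), ∏ q ∈ P, localFactor a b h q m -
        (density M * (X * u ^ k) : ℝ) * A‖ ≤ C * (X ^ (1 - c) * (u ^ k) ^ (1 - c)) * B := by
      have hdiv : x / norm (d * p ^ k) = X * u ^ k := by
        rw [map_mul, map_pow, Nat.cast_mul, Nat.cast_pow, hX, hu, inv_pow]
        field_simp
      rw [← Real.mul_rpow hX0 (by positivity), ← hdiv]
      exact ih hP (mul_ne_zero hd (pow_ne_zero _ hp.ne_zero)) fun q hq =>
        not_dvd_mul_pow hp (hP q hq) (ne_of_mem_of_not_mem hq hpP) (hPd q hq) k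
    have ih_one := ih_pow 1
    simp only [pow_one] at ih_one
    simp_rw [Finset.prod_insert hpP]
    rw [sum_multiplesLE_localFactor_mul hp hpd]
    have hbound := norm_add_mul_add_mul_sub_le a b (ih hP hd hPd) ih_one (ih_pow h)
    have hmain : ((density M * X : ℝ) : ℂ) * ((1 + a * (u : ℝ) + b * (u ^ h : ℝ)) * A) =
        (density M * X : ℝ) * A + a * ((density M * (X * u) : ℝ) * A) +
          b * ((density M * (X * u ^ h) : ℝ) * A) := by
      push_cast
      ring
    rw [hmain]
    exact hbound.trans_eq (by ring)

end LocalFactors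

section HFree

variable {M : Type*} [CommMonoidWithZero M]

/-- An element is `h`-free if it is not divisible by the `h`-th power of a prime. -/
def HFree (h : ℕ) (m : M) : Prop :=
  ∀ p, Prime p → ¬ p ^ h ∣ m

open scoped Classical in
/-- The number `ω_P(m)` of elements of `P` that divide `m`. -/
def primeCount (P : Finset M) (m : M) : ℕ :=
  {p ∈ P | p ∣ m}.card

open scoped Classical in
theorem prod_localFactor {h : ℕ} (hh : h ≠ 0) (z : ℂ) (P : Finset M) (m : M) :
    ∏ p ∈ P, localFactor (z - 1) (-z) h p m =
      if ∀ p ∈ P, ¬ p ^ h ∣ m then z ^ primeCount P m else 0 := by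
  split_ifs with hfree
  · rw [primeCount, ← Finset.prod_const, Finset.prod_filter]
    refine Finset.prod_congr rfl fun p hp => ?_
    rw [localFactor, if_neg (hfree p hp)]
    split_ifs <;> ring
  · push Not at hfree
    obtain ⟨p, hp, hpm⟩ := hfree
    refine Finset.prod_eq_zero hp ?_
    rw [localFactor, if_pos hpm, if_pos ((dvd_pow_self p hh).trans hpm)]
    ring

variable [ArithmeticSemigroup M]

variable (M) in
open scoped Classical in
/-- The set `S_h(x)` of nonzero `h`-free elements of norm at most `x`. -/
def hFreeLE (h : ℕ) (x : ℝ) : Finset M :=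
  {m ∈ elementsLE M x | HFree h m}

theorem mem_hFreeLE {h : ℕ} {x : ℝ} {m : M} :
    m ∈ hFreeLE M h x ↔ (m ≠ 0 ∧ (norm m : ℝ) ≤ x) ∧ HFree h m := by
  simp only [hFreeLE, Finset.mem_filter, mem_elementsLE]

open scoped Classical in
variable (M) in
/-- The set of nonzero elements of norm at most `x` divisible by the `h`-th power of a prime of norm
exceeding `y`. -/
def largePowerLE (h : ℕ) (x y : ℝ) : Finset M :=
  {m ∈ elementsLE M x | ∃ p, Prime p ∧ y < norm p ∧ p ^ h ∣ m}

theorem largePowerLE_subset_biUnion {h : ℕ} (hh : h ≠ 0) (x y : ℝ) [DecidableEq M] :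
    largePowerLE M h x y ⊆
      {p ∈ primesLE M x | y < norm p}.biUnion fun p => multiplesLE x (p ^ h) := by
  intro m hm
  simp only [largePowerLE, Finset.mem_filter, mem_elementsLE] at hm
  obtain ⟨⟨hm0, hmx⟩, p, hp, hyp, hpm⟩ := hm
  simp only [Finset.mem_biUnion, Finset.mem_filter, mem_primesLE, mem_multiplesLE]
  exact ⟨p, ⟨⟨hp, (norm_le_of_dvd hm0 ((dvd_pow_self p hh).trans hpm)).trans hmx⟩, hyp⟩,
    ⟨hm0, hmx⟩, hpm⟩

theorem inv_norm_pow_le_sq {h : ℕ} (hh : 2 ≤ h) (m : M) :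
    ((norm m : ℝ)⁻¹) ^ h ≤ ((norm m : ℝ)⁻¹) ^ 2 :=
  pow_le_pow_of_le_one (by positivity) (Nat.cast_inv_le_one _) hh

theorem inv_norm_pow_le_quarter {h : ℕ} (hh : 2 ≤ h) {p : M} (hp : Prime p) :
    ((norm p : ℝ)⁻¹) ^ h ≤ 1 / 4 :=
  calc ((norm p : ℝ)⁻¹) ^ h ≤ ((norm p : ℝ)⁻¹) ^ 2 := inv_norm_pow_le_sq hh p
    _ ≤ (1 / 2) ^ 2 := by gcongr; exact inv_norm_le_half hp
    _ = 1 / 4 := by norm_num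

variable (M)

theorem exists_card_largePowerLE_le : ∃ C > 0, ∀ h : ℕ, 2 ≤ h → ∀ x > 0, ∀ y : ℝ, 1 ≤ y →
    ((largePowerLE M h x y).card : ℝ) ≤ C * x * y ^ (-(1 / 2) : ℝ) := by
  classical
  obtain ⟨C, hC, hcount⟩ := exists_card_elementsLE_le M
  refine ⟨C * (zeta M (3 / 2) + 1), by have := zeta_nonneg M (3 / 2); positivity,
    fun h hh x hx y hy => ?_⟩
  set Q := {p ∈ primesLE M x | y < norm p}
  have hterm : ∀ p ∈ Q, ((multiplesLE x (p ^ h)).card : ℝ) ≤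
      C * x * y ^ (-(1 / 2) : ℝ) * (norm p : ℝ) ^ (-(3 / 2) : ℝ) := by
    intro p hpQ
    simp only [Q, Finset.mem_filter, mem_primesLE] at hpQ
    obtain ⟨⟨hp, -⟩, hyp⟩ := hpQ
    have hp0 : (0 : ℝ) < norm p := by linarith
    rw [card_multiplesLE x (pow_ne_zero _ hp.ne_zero)]
    calc ((elementsLE M (x / norm (p ^ h))).card : ℝ) ≤ C * (x / norm (p ^ h)) :=
          hcount _ (by positivity)
      _ = C * x * ((norm p : ℝ)⁻¹) ^ h := by rw [map_pow, Nat.cast_pow, inv_pow]; ring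
      _ ≤ C * x * ((norm p : ℝ)⁻¹) ^ 2 := by gcongr 1; exact inv_norm_pow_le_sq hh p
      _ = C * x * ((norm p : ℝ) ^ (-(1 / 2) : ℝ) * (norm p : ℝ) ^ (-(3 / 2) : ℝ)) := by
          rw [← Real.rpow_add hp0, inv_pow, ← Real.rpow_natCast, ← Real.rpow_neg hp0.le]
          norm_num
      _ ≤ C * x * (y ^ (-(1 / 2) : ℝ) * (norm p : ℝ) ^ (-(3 / 2) : ℝ)) := by
          gcongr C * x * (?_ * _)
          exact Real.rpow_le_rpow_of_nonpos (by linarith) hyp.le (by norm_num)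
      _ = _ := by ring
  calc ((largePowerLE M h x y).card : ℝ) ≤ ∑ p ∈ Q, ((multiplesLE x (p ^ h)).card : ℝ) := by
        exact_mod_cast (Finset.card_le_card
          (largePowerLE_subset_biUnion (M := M) (by omega) x y)).trans Finset.card_biUnion_le
    _ ≤ ∑ p ∈ Q, C * x * y ^ (-(1 / 2) : ℝ) * (norm p : ℝ) ^ (-(3 / 2) : ℝ) :=
        Finset.sum_le_sum hterm
    _ ≤ C * x * y ^ (-(1 / 2) : ℝ) * (zeta M (3 / 2) + 1) := by
        rw [← Finset.mul_sum]
        gcongr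
        linarith [sum_norm_rpow_neg_le_zeta M (by norm_num : (1 : ℝ) < 3 / 2) Q]
    _ = _ := by ring

theorem norm_sum_hFreeLE_sub_sum_prod_localFactor_le {h : ℕ} (hh : h ≠ 0) {z : ℂ} (hz : ‖z‖ ≤ 1)
    (x y : ℝ) :
    ‖∑ m ∈ hFreeLE M h x, z ^ primeCount (primesLE M y) m -
        ∑ m ∈ elementsLE M x, ∏ p ∈ primesLE M y, localFactor (z - 1) (-z) h p m‖ ≤
      (largePowerLE M h x y).card := by
  classical
  simp_rw [prod_localFactor hh]
  rw [hFreeLE, Finset.sum_filter, ← Finset.sum_sub_distrib, largePowerLE, Finset.card_filter,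
    Nat.cast_sum]
  refine norm_sum_le_of_le _ fun m _ => ?_
  rw [Nat.cast_ite, Nat.cast_one, Nat.cast_zero]
  have hpow : ‖z ^ primeCount (primesLE M y) m‖ ≤ 1 := by
    rw [norm_pow]
    exact pow_le_one₀ (norm_nonneg z) hz
  have hsmall : HFree h m → ∀ p ∈ primesLE M y, ¬ p ^ h ∣ m :=
    fun hm p hp => hm p (prime_of_mem_primesLE hp)
  have hlarge : (∀ p ∈ primesLE M y, ¬ p ^ h ∣ m) → ¬ HFree h m →
      ∃ p, Prime p ∧ y < norm p ∧ p ^ h ∣ m := fun hm hnot => by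
    simp only [HFree, not_forall, not_not] at hnot
    obtain ⟨p, hp, hpm⟩ := hnot
    exact ⟨p, hp, lt_of_not_ge fun hpy => hm p (mem_primesLE.mpr ⟨hp, hpy⟩) hpm, hpm⟩
  split_ifs <;> simp_all

end HFree

section HFreeDensity

variable {M : Type*} [CommMonoidWithZero M] [ArithmeticSemigroup M]

/-- The limiting probability that an `h`-free element is divisible by the prime `p`. -/
def divisorProb (h : ℕ) (p : M) : ℝ :=
  ((norm p : ℝ)⁻¹ - ((norm p : ℝ)⁻¹) ^ h) / (1 - ((norm p : ℝ)⁻¹) ^ h)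

variable (M) in
/-- The density of the elements not divisible by the `h`-th power of a prime of norm at most `y`. -/
def sieveDensity (h : ℕ) (y : ℝ) : ℝ :=
  ∏ p ∈ primesLE M y, (1 - ((norm p : ℝ)⁻¹) ^ h)

variable (M) in
theorem exp_neg_zeta_two_le_sieveDensity {h : ℕ} (hh : 2 ≤ h) (y : ℝ) :
    Real.exp (-(2 * zeta M 2)) ≤ sieveDensity M h y :=
  calc Real.exp (-(2 * zeta M 2))
      ≤ Real.exp (∑ p ∈ primesLE M y, -(2 * ((norm p : ℝ)⁻¹) ^ 2)) := by
        rw [Finset.sum_neg_distrib, ← Finset.mul_sum]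
        gcongr
        exact sum_inv_norm_sq_le_zeta_two M _
    _ ≤ sieveDensity M h y := by
        rw [Real.exp_sum, sieveDensity]
        refine Finset.prod_le_prod (fun _ _ => (Real.exp_pos _).le) fun p hp => ?_
        have hquarter := inv_norm_pow_le_quarter hh (prime_of_mem_primesLE hp)
        have hsq := inv_norm_pow_le_sq hh p
        have hpos : 0 ≤ ((norm p : ℝ)⁻¹) ^ h := by positivity
        rw [Real.exp_neg, inv_le_comm₀ (Real.exp_pos _) (by linarith)]
        refine (inv_one_sub_le_exp (by linarith)).trans (Real.exp_le_exp.mpr ?_)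
        nlinarith

theorem sieveDensity_pos {h : ℕ} (hh : 2 ≤ h) (y : ℝ) : 0 < sieveDensity M h y :=
  (Real.exp_pos _).trans_le (exp_neg_zeta_two_le_sieveDensity M hh y)

theorem prod_one_add_eq_sieveDensity_mul_prod {h : ℕ} (hh : 2 ≤ h) (z : ℂ) (y : ℝ) :
    ∏ p ∈ primesLE M y,
        (1 + (z - 1) * ((norm p : ℝ)⁻¹ : ℝ) + -z * (((norm p : ℝ)⁻¹) ^ h : ℝ)) =
      sieveDensity M h y * ∏ p ∈ primesLE M y, (1 + (z - 1) * (divisorProb h p : ℝ)) := by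
  rw [sieveDensity, Complex.ofReal_prod, ← Finset.prod_mul_distrib]
  refine Finset.prod_congr rfl fun p hp => ?_
  have hquarter := inv_norm_pow_le_quarter hh (prime_of_mem_primesLE hp)
  rw [divisorProb]
  generalize ((norm p : ℝ)⁻¹) ^ h = v at *
  have hv : ((1 - v : ℝ) : ℂ) ≠ 0 := Complex.ofReal_ne_zero.mpr (by linarith)
  push_cast at hv ⊢
  field_simp
  ring

theorem inv_norm_rpow_one_sub_le {p : M} (hp : Prime p) {y c : ℝ} (hpy : (norm p : ℝ) ≤ y)
    (hc : 0 ≤ c) : ((norm p : ℝ)⁻¹) ^ (1 - c) ≤ y ^ c * (norm p : ℝ)⁻¹ := by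
  have hp2 := two_le_norm_of_prime hp
  rw [Real.rpow_sub (by positivity), Real.rpow_one, Real.inv_rpow (by positivity), div_inv_eq_mul,
    mul_comm]
  gcongr

theorem inv_norm_pow_rpow_one_sub_le {h : ℕ} (hh : 2 ≤ h) {p : M} (hp : Prime p) {c : ℝ}
    (hc : c ≤ 1 / 4) : (((norm p : ℝ)⁻¹) ^ h) ^ (1 - c) ≤ (norm p : ℝ) ^ (-(3 / 2) : ℝ) := by
  have hp2 := two_le_norm_of_prime hp
  calc (((norm p : ℝ)⁻¹) ^ h) ^ (1 - c) ≤ (((norm p : ℝ)⁻¹) ^ h) ^ (3 / 4 : ℝ) :=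
        Real.rpow_le_rpow_of_exponent_ge (by positivity)
          ((inv_norm_pow_le_quarter hh hp).trans (by norm_num)) (by linarith)
    _ ≤ (((norm p : ℝ)⁻¹) ^ 2) ^ (3 / 4 : ℝ) := by
        gcongr 1
        exact inv_norm_pow_le_sq hh p
    _ = (norm p : ℝ) ^ (-(3 / 2) : ℝ) := by
        rw [← Real.rpow_natCast, ← Real.rpow_mul (by positivity), Real.inv_rpow (by positivity),
          ← Real.rpow_neg (by positivity)]
        norm_num

theorem prod_one_add_rpow_le_exp {h : ℕ} (hh : 2 ≤ h) {a b c : ℝ} (ha : 0 ≤ a)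
    (hb : b ∈ Set.Icc 0 1) (hc : c ∈ Set.Icc 0 (1 / 4)) (y : ℝ) :
    ∏ p ∈ primesLE M y,
        (1 + a * ((norm p : ℝ)⁻¹) ^ (1 - c) + b * (((norm p : ℝ)⁻¹) ^ h) ^ (1 - c)) ≤
      Real.exp (a * (y ^ c * mertensSum M y)) * Real.exp (zeta M (3 / 2)) := by
  have hterm : ∀ p ∈ primesLE M y,
      1 + a * ((norm p : ℝ)⁻¹) ^ (1 - c) + b * (((norm p : ℝ)⁻¹) ^ h) ^ (1 - c) ≤
        Real.exp (a * (y ^ c * (norm p : ℝ)⁻¹) + (norm p : ℝ) ^ (-(3 / 2) : ℝ)) := by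
    intro p hp
    rw [mem_primesLE] at hp
    have hone := mul_le_mul_of_nonneg_left (inv_norm_rpow_one_sub_le hp.1 hp.2 hc.1) ha
    have hpow := (mul_le_of_le_one_left (by positivity) hb.2).trans
      (inv_norm_pow_rpow_one_sub_le hh hp.1 hc.2)
    refine le_trans ?_ (Real.add_one_le_exp _)
    linarith
  calc _ ≤ ∏ p ∈ primesLE M y,
        Real.exp (a * (y ^ c * (norm p : ℝ)⁻¹) + (norm p : ℝ) ^ (-(3 / 2) : ℝ)) :=
        Finset.prod_le_prod (fun p _ => by have := hb.1; positivity) hterm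
    _ = Real.exp (a * (y ^ c * mertensSum M y) +
          ∑ p ∈ primesLE M y, (norm p : ℝ) ^ (-(3 / 2) : ℝ)) := by
        rw [← Real.exp_sum, Finset.sum_add_distrib, ← Finset.mul_sum, ← Finset.mul_sum, mertensSum]
    _ ≤ Real.exp (a * (y ^ c * mertensSum M y) + zeta M (3 / 2)) := by
        gcongr
        exact sum_norm_rpow_neg_le_zeta M (by norm_num) _
    _ = _ := Real.exp_add _ _

variable (M)

theorem exists_norm_sum_hFreeLE_sub_le : ∃ C > 0, ∃ δ > (0 : ℝ), ∀ h : ℕ, 2 ≤ h → ∀ z : ℂ, ‖z‖ ≤ 1 →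
    ∀ x ≥ (1 : ℝ), ∀ y ≥ (1 : ℝ), ∀ c ∈ Set.Icc 0 δ,
      ‖∑ m ∈ hFreeLE M h x, z ^ primeCount (primesLE M y) m -
          (density M * x * sieveDensity M h y : ℝ) *
            ∏ p ∈ primesLE M y, (1 + (z - 1) * (divisorProb h p : ℝ))‖ ≤
        C * x * (y ^ (-(1 / 2) : ℝ) +
          x ^ (-c) * Real.exp (‖z - 1‖ * (y ^ c * mertensSum M y))) := by
  obtain ⟨C, hC, δ, hδ, hcount⟩ := exists_card_elementsLE_sub_le_rpow M
  obtain ⟨D, hD, hlarge⟩ := exists_card_largePowerLE_le M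
  set B := Real.exp (zeta M (3 / 2))
  refine ⟨D + C * B, by positivity, δ, hδ.1, fun h hh z hz x hx y hy c hc => ?_⟩
  have hx0 : 0 < x := by linarith
  have : 0 < y := by linarith
  set S := ∑ m ∈ elementsLE M x, ∏ p ∈ primesLE M y, localFactor (z - 1) (-z) h p m
  set G := ∏ p ∈ primesLE M y, (1 + (z - 1) * (divisorProb h p : ℝ))
  set E := Real.exp (‖z - 1‖ * (y ^ c * mertensSum M y))
  have hsmall : ‖S - (density M * x * sieveDensity M h y : ℝ) * G‖ ≤ C * x ^ (1 - c) * (E * B) := by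
    have hprime : ∀ p ∈ primesLE M y, Prime p := fun p => prime_of_mem_primesLE
    have : Nontrivial M := domain_nontrivial (norm (M := M)) (map_zero _) (map_one _)
    have hsum := norm_sum_prod_localFactor_sub_le (fun y hy => hcount y hy c hc) (z - 1) (-z) h hx0
      hprime (one_ne_zero (α := M)) fun p hp hp1 => (hprime p hp).not_dvd_one hp1
    have hone : multiplesLE x (1 : M) = elementsLE M x := by
      simp only [multiplesLE, one_dvd, Finset.filter_true]
    rw [hone, map_one, Nat.cast_one, div_one, norm_neg,
      prod_one_add_eq_sieveDensity_mul_prod hh z y, ← mul_assoc, ← Complex.ofReal_mul] at hsum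
    refine hsum.trans ?_
    gcongr
    exact prod_one_add_rpow_le_exp hh (norm_nonneg _) ⟨norm_nonneg z, hz⟩
      ⟨hc.1, hc.2.trans hδ.2⟩ y
  calc _ ≤ D * x * y ^ (-(1 / 2) : ℝ) + C * x ^ (1 - c) * (E * B) :=
        (norm_sub_le_norm_sub_add_norm_sub _ S _).trans (add_le_add
          ((norm_sum_hFreeLE_sub_sum_prod_localFactor_le M (by omega) hz x y).trans
            (hlarge h hh x hx0 y hy)) hsmall)
    _ = x * (D * y ^ (-(1 / 2) : ℝ) + C * B * (x ^ (-c) * E)) := by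
        rw [sub_eq_add_neg, Real.rpow_add hx0, Real.rpow_one]
        ring
    _ ≤ x * ((D + C * B) * y ^ (-(1 / 2) : ℝ) + (D + C * B) * (x ^ (-c) * E)) := by
        have hCB : 0 ≤ C * B := by positivity
        gcongr <;> linarith
    _ = _ := by ring

theorem exists_norm_sum_hFreeLE_div_sub_le {h : ℕ} (hh : 2 ≤ h) :
    ∃ C > 0, ∃ δ > (0 : ℝ), ∀ z : ℂ, ‖z‖ ≤ 1 → ∀ x ≥ (1 : ℝ), ∀ y ≥ (1 : ℝ), ∀ c ∈ Set.Icc 0 δ,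
      ‖(∑ m ∈ hFreeLE M h x, z ^ primeCount (primesLE M y) m) /
            (density M * x * sieveDensity M h y : ℝ) -
          ∏ p ∈ primesLE M y, (1 + (z - 1) * (divisorProb h p : ℝ))‖ ≤
        C * (y ^ (-(1 / 2) : ℝ) + x ^ (-c) * Real.exp (‖z - 1‖ * (y ^ c * mertensSum M y))) := by
  obtain ⟨C, hC, δ, hδ, hbound⟩ := exists_norm_sum_hFreeLE_sub_le M
  have hκ := density_pos M
  set A := Real.exp (-(2 * zeta M 2))
  refine ⟨C / (density M * A), by positivity, δ, hδ, fun z hz x hx y hy c hc => ?_⟩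
  have hpos : 0 < density M * x * sieveDensity M h y :=
    mul_pos (by positivity) (sieveDensity_pos hh y)
  have : 0 < x := by linarith
  have : 0 < y := by linarith
  rw [div_sub' (Complex.ofReal_ne_zero.mpr hpos.ne'), norm_div, Complex.norm_of_nonneg hpos.le]
  calc _ ≤ C * x * (y ^ (-(1 / 2) : ℝ) + x ^ (-c) *
        Real.exp (‖z - 1‖ * (y ^ c * mertensSum M y))) / (density M * x * A) := by
        gcongr
        · exact hbound h hh z hz x hx y hy c hc
        · exact exp_neg_zeta_two_le_sieveDensity M hh y
    _ = _ := by field_simp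

end HFreeDensity

end ArithmeticSemigroup

/-! ### The scale `log log x` -/

section LogLog

open Asymptotics

/-- The iterated logarithm `log log x`, which is the mean and the variance of `ω` near `x` up to
lower order terms. -/
def logLog (x : ℝ) : ℝ := Real.log (Real.log x)

/-- The bound `x ^ (1 / log log x)` on the norm of the primes counted by the truncation of `ω`. -/
def cutoff (x : ℝ) : ℝ := Real.exp (Real.log x / logLog x)

theorem tendsto_logLog_atTop : Tendsto logLog atTop atTop :=
  Real.tendsto_log_atTop.comp Real.tendsto_log_atTop

theorem tendsto_sqrt_logLog_atTop : Tendsto (fun x => √(logLog x)) atTop atTop :=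
  Real.tendsto_sqrt_atTop.comp tendsto_logLog_atTop

theorem tendsto_logLog_div_log : Tendsto (fun x => logLog x / Real.log x) atTop (𝓝 0) :=
  Real.isLittleO_log_id_atTop.tendsto_div_nhds_zero.comp Real.tendsto_log_atTop

theorem tendsto_cutoff_atTop : Tendsto cutoff atTop atTop := by
  have hpos : ∀ᶠ x in atTop, 0 < logLog x / Real.log x := by
    filter_upwards [tendsto_logLog_atTop.eventually_gt_atTop 0,
      Real.tendsto_log_atTop.eventually_gt_atTop 0] with x hL hl using div_pos hL hl
  refine Real.tendsto_exp_atTop.comp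
    ((tendsto_nhdsWithin_iff.mpr ⟨tendsto_logLog_div_log, hpos⟩).inv_tendsto_nhdsGT_zero.congr
      fun x => ?_)
  rw [Pi.inv_apply, inv_div]

theorem eventually_cutoff_le : ∀ᶠ x in atTop, cutoff x ≤ x := by
  filter_upwards [eventually_ge_atTop 1, tendsto_logLog_atTop.eventually_ge_atTop 1] with x hx hL
  exact (Real.exp_le_exp.mpr (div_le_self (Real.log_nonneg hx) hL)).trans_eq
    (Real.exp_log (by linarith))

theorem logLog_cutoff {x : ℝ} (hx : 1 < Real.log x) :
    logLog (cutoff x) = logLog x - Real.log (logLog x) := by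
  have hL : logLog x ≠ 0 := (Real.log_pos hx).ne'
  rw [logLog, cutoff, Real.log_exp, Real.log_div (by linarith) hL, logLog]

theorem cutoff_rpow_logLog_div_log {x : ℝ} (hx : 1 < Real.log x) :
    cutoff x ^ (logLog x / Real.log x) = Real.exp 1 := by
  have hL : logLog x ≠ 0 := (Real.log_pos hx).ne'
  rw [cutoff, ← Real.exp_mul, div_mul_div_cancel₀ hL, div_self (by linarith)]

theorem rpow_neg_logLog_div_log {x : ℝ} (hx : 0 < x) (hlog : Real.log x ≠ 0) :
    x ^ (-(logLog x / Real.log x)) = Real.exp (-logLog x) := by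
  rw [Real.rpow_def_of_pos hx, mul_neg, mul_div_cancel₀ _ hlog]

theorem const_isLittleO_sqrt_logLog (C : ℝ) :
    (fun _ => C) =o[atTop] fun x => √(logLog x) :=
  isLittleO_const_left.mpr <| .inr <| tendsto_norm_atTop_atTop.comp tendsto_sqrt_logLog_atTop

theorem log_logLog_isLittleO_sqrt_logLog :
    (fun x => Real.log (logLog x)) =o[atTop] fun x => √(logLog x) := by
  simpa only [Real.sqrt_eq_rpow, Function.comp_def] using
    (isLittleO_log_rpow_atTop one_half_pos).comp_tendsto tendsto_logLog_atTop

theorem logLog_cutoff_sub_logLog_isLittleO :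
    (fun x => logLog (cutoff x) - logLog x) =o[atTop] fun x => √(logLog x) := by
  refine log_logLog_isLittleO_sqrt_logLog.neg_left.congr' ?_ .rfl
  filter_upwards [Real.tendsto_log_atTop.eventually_gt_atTop 1] with x hx
  rw [logLog_cutoff hx, sub_sub_cancel_left]

theorem sqrt_logLog_cutoff_isBigO :
    (fun x => √(logLog (cutoff x))) =O[atTop] fun x => √(logLog x) := by
  refine .of_bound' ?_
  filter_upwards [Real.tendsto_log_atTop.eventually_gt_atTop 1,
    tendsto_logLog_atTop.eventually_ge_atTop 1] with x hx hL
  rw [Real.norm_of_nonneg (Real.sqrt_nonneg _), Real.norm_of_nonneg (Real.sqrt_nonneg _),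
    logLog_cutoff hx]
  exact Real.sqrt_le_sqrt (sub_le_self _ (Real.log_nonneg hL))

theorem sqrt_logLog_isLittleO_logLog :
    (fun x => √(logLog x)) =o[atTop] logLog := by
  refine ((isBigO_refl _ _).mul_isLittleO (const_isLittleO_sqrt_logLog 1)).congr'
    (.of_forall fun _ => mul_one _) ?_
  filter_upwards [tendsto_logLog_atTop.eventually_ge_atTop 0] with x hx using Real.mul_self_sqrt hx

/-- The point `exp (i t / √(log log x))` of the unit circle: the mean of its `ω`-th power is the
characteristic function at `t` of `ω / √(log log x)`. -/
def unitPhase (t x : ℝ) : ℂ := Complex.exp (Complex.I * (t / √(logLog x) : ℝ))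

theorem norm_unitPhase (t x : ℝ) : ‖unitPhase t x‖ = 1 :=
  Complex.norm_exp_I_mul_ofReal _

theorem norm_unitPhase_sub_one_isBigO (t : ℝ) :
    (fun x => ‖unitPhase t x - 1‖) =O[atTop] fun x => t / √(logLog x) :=
  .of_bound' (.of_forall fun x => by
    rw [norm_norm]
    exact Real.norm_exp_I_mul_ofReal_sub_one_le)

theorem tendsto_norm_unitPhase_sub_one (t : ℝ) :
    Tendsto (fun x => ‖unitPhase t x - 1‖) atTop (𝓝 0) :=
  (norm_unitPhase_sub_one_isBigO t).trans_tendsto (tendsto_sqrt_logLog_atTop.const_div_atTop t)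

theorem exp_mul_div_sqrt_logLog_mul_I (t x : ℝ) (k : ℕ) :
    Complex.exp ((t * ((k - logLog x) / √(logLog x)) : ℝ) * Complex.I) =
      unitPhase t x ^ k * Complex.exp (-(Complex.I * (t * √(logLog x) : ℝ))) := by
  rw [unitPhase, ← Complex.exp_nat_mul, ← Complex.exp_add]
  congr 1
  rw [sub_div, Real.div_sqrt]
  push_cast
  ring

end LogLog

section CharacteristicFunction

open Asymptotics

theorem norm_prod_sub_prod_le_sum {ι R : Type*} [NormedCommRing R] [NormOneClass R]
    (s : Finset ι) {f g : ι → R} (hf : ∀ i ∈ s, ‖f i‖ ≤ 1) (hg : ∀ i ∈ s, ‖g i‖ ≤ 1) :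
    ‖∏ i ∈ s, f i - ∏ i ∈ s, g i‖ ≤ ∑ i ∈ s, ‖f i - g i‖ := by
  induction s using Finset.cons_induction with
  | empty => simp
  | cons a s ha ih =>
    rw [Finset.forall_mem_cons] at hf hg
    have hprod : ‖∏ i ∈ s, f i‖ ≤ 1 :=
      (Finset.norm_prod_le s f).trans (Finset.prod_le_one (fun _ _ => norm_nonneg _) hf.2)
    have hsplit : f a * ∏ i ∈ s, f i - g a * ∏ i ∈ s, g i =
        (f a - g a) * ∏ i ∈ s, f i + g a * (∏ i ∈ s, f i - ∏ i ∈ s, g i) := by ring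
    rw [Finset.prod_cons, Finset.prod_cons, Finset.sum_cons, hsplit]
    refine (norm_add_le _ _).trans (add_le_add ?_ ?_)
    · exact (norm_mul_le _ _).trans (mul_le_of_le_one_right (norm_nonneg _) hprod)
    · exact (norm_mul_le _ _).trans
        ((mul_le_of_le_one_left (norm_nonneg _) hg.1).trans (ih hf.2 hg.2))

theorem norm_one_add_sub_one_mul_le_one {z : ℂ} (hz : ‖z‖ ≤ 1) {a : ℝ} (ha : a ∈ Set.Icc 0 1) :
    ‖1 + (z - 1) * a‖ ≤ 1 := by
  have hconvex : 1 + (z - 1) * a = ((1 - a : ℝ) : ℂ) + z * a := by push_cast; ring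
  rw [hconvex]
  calc _ ≤ ‖((1 - a : ℝ) : ℂ)‖ + ‖z‖ * ‖(a : ℂ)‖ := by
        rw [← norm_mul]
        exact norm_add_le _ _
    _ = 1 - a + ‖z‖ * a := by
        rw [Complex.norm_of_nonneg ha.1, Complex.norm_of_nonneg (sub_nonneg.mpr ha.2)]
    _ ≤ 1 := by linarith [mul_le_of_le_one_left ha.1 hz]

theorem norm_exp_sub_one_mul_le_one {z : ℂ} (hz : ‖z‖ ≤ 1) {a : ℝ} (ha : 0 ≤ a) :
    ‖Complex.exp ((z - 1) * a)‖ ≤ 1 := by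
  rw [Complex.norm_exp, Real.exp_le_one_iff, Complex.re_mul_ofReal, Complex.sub_re, Complex.one_re]
  exact mul_nonpos_of_nonpos_of_nonneg (sub_nonpos.mpr ((Complex.re_le_norm z).trans hz)) ha

theorem norm_prod_one_add_sub_exp_le {ι : Type*} (s : Finset ι) {a : ι → ℝ}
    (ha : ∀ i ∈ s, a i ∈ Set.Icc 0 1) {z : ℂ} (hz : ‖z‖ ≤ 1) (hz1 : ‖z - 1‖ ≤ 1) :
    ‖∏ i ∈ s, (1 + (z - 1) * a i) - Complex.exp ((z - 1) * (∑ i ∈ s, a i : ℝ))‖ ≤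
      ‖z - 1‖ ^ 2 * ∑ i ∈ s, a i ^ 2 := by
  rw [Complex.ofReal_sum, Finset.mul_sum, Complex.exp_sum, Finset.mul_sum]
  refine (norm_prod_sub_prod_le_sum s
    (fun i hi => norm_one_add_sub_one_mul_le_one hz (ha i hi))
    fun i hi => norm_exp_sub_one_mul_le_one hz (ha i hi).1).trans (Finset.sum_le_sum fun i hi => ?_)
  have hnorm : ‖(z - 1) * a i‖ = ‖z - 1‖ * a i := by
    rw [norm_mul, Complex.norm_of_nonneg (ha i hi).1]
  have hexp := Complex.norm_exp_sub_one_sub_id_le (x := (z - 1) * a i)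
    (hnorm.trans_le (mul_le_one₀ hz1 (ha i hi).1 (ha i hi).2))
  rwa [sub_sub, norm_sub_rev, hnorm, mul_pow] at hexp

theorem tendsto_sq_mul_exp_sub_one_sub {α : Type*} {l : Filter α} {s : α → ℝ}
    (hs : Tendsto s l atTop) (t : ℝ) :
    Tendsto (fun x => (s x : ℂ) ^ 2 *
      (Complex.exp (Complex.I * (t / s x : ℝ)) - 1 - Complex.I * (t / s x : ℝ)))
      l (𝓝 ((-(t ^ 2 / 2) : ℝ) : ℂ)) := by
  have hw : Tendsto (fun x => Complex.I * ((t / s x : ℝ) : ℂ)) l (𝓝 0) := by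
    simpa using ((Complex.continuous_ofReal.tendsto 0).comp (hs.const_div_atTop t)).const_mul
      Complex.I
  have hsq : ∀ᶠ x in l, (s x : ℂ) ^ 2 * (Complex.I * ((t / s x : ℝ) : ℂ)) ^ 2 = -(t ^ 2 : ℝ) := by
    filter_upwards [hs.eventually_ne_atTop 0] with x hx
    have : (s x : ℂ) ≠ 0 := Complex.ofReal_ne_zero.mpr hx
    rw [mul_pow, Complex.I_sq]
    push_cast
    field_simp
  have htaylor := (Complex.exp_sub_sum_range_succ_isLittleO_pow 2).comp_tendsto hw
  have hrem := (((isBigO_refl (fun x => (s x : ℂ) ^ 2) l).mul_isLittleO htaylor).congr'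
    .rfl hsq).trans_isBigO (isBigO_const_const _ (one_ne_zero (α := ℂ)) l)
  have hlim := ((isLittleO_one_iff ℂ).mp hrem).add_const ((-(t ^ 2 / 2) : ℝ) : ℂ)
  rw [zero_add] at hlim
  refine hlim.congr' ?_
  filter_upwards [hsq] with x hx
  simp only [Function.comp_apply, Finset.sum_range_succ, Finset.sum_range_zero, Nat.factorial]
  push_cast at hx ⊢
  linear_combination -hx / 2

theorem tendsto_exp_sub_one_mul_sub {α : Type*} {l : Filter α} {s A : α → ℝ}
    (hs : Tendsto s l atTop) (hA : (fun x => A x - s x ^ 2) =o[l] s) (t : ℝ) :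
    Tendsto (fun x => (Complex.exp (Complex.I * (t / s x : ℝ)) - 1) * A x -
      Complex.I * (t * s x : ℝ)) l (𝓝 ((-(t ^ 2 / 2) : ℝ) : ℂ)) := by
  have hexp : (fun x => Complex.exp (Complex.I * (t / s x : ℝ)) - 1) =O[l] fun x => t / s x :=
    .of_bound' (.of_forall fun x => Real.norm_exp_I_mul_ofReal_sub_one_le)
  have hsmall : (fun x => (Complex.exp (Complex.I * (t / s x : ℝ)) - 1) * ((A x - s x ^ 2 : ℝ) : ℂ))
      =o[l] fun _ => (1 : ℝ) := by
    refine (hexp.mul_isLittleO (Complex.isLittleO_ofReal_left.mpr hA)).trans_isBigO ?_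
    refine .of_bound |t| ?_
    filter_upwards [hs.eventually_ne_atTop 0] with x hx
    rw [div_mul_cancel₀ t hx, norm_one, mul_one, Real.norm_eq_abs]
  have hlim := (tendsto_sq_mul_exp_sub_one_sub hs t).add ((isLittleO_one_iff ℝ).mp hsmall)
  rw [add_zero] at hlim
  refine hlim.congr' ?_
  filter_upwards [hs.eventually_ne_atTop 0] with x hx
  have : (s x : ℂ) ≠ 0 := Complex.ofReal_ne_zero.mpr hx
  push_cast
  field_simp
  ring

end CharacteristicFunction

/-! ### The truncated prime divisor count -/

namespace ArithmeticSemigroup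

open Asymptotics

section TruncatedMean

variable (M : Type*) [CommMonoidWithZero M] [ArithmeticSemigroup M]

theorem mertensSum_sub_logLog_isLittleO :
    (fun x => mertensSum M x - logLog x) =o[atTop] fun x => √(logLog x) := by
  obtain ⟨C₁, hlower⟩ := exists_eventually_log_log_sub_le_mertensSum M
  obtain ⟨C₂, hupper⟩ := exists_eventually_mertensSum_le M
  refine IsBigO.trans_isLittleO (.of_norm_eventuallyLE ?_) (log_logLog_isLittleO_sqrt_logLog.add
    (const_isLittleO_sqrt_logLog (max C₁ C₂)))
  filter_upwards [hlower, hupper, tendsto_logLog_atTop.eventually_ge_atTop 1] with x hlo hup hL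
  rw [Real.norm_eq_abs, abs_le]
  rw [← logLog] at hlo hup
  have hlog := Real.log_nonneg hL
  constructor <;> linarith [le_max_left C₁ C₂, le_max_right C₁ C₂]

theorem mertensSum_cutoff_sub_logLog_isLittleO :
    (fun x => mertensSum M (cutoff x) - logLog x) =o[atTop] fun x => √(logLog x) := by
  have hcutoff := ((mertensSum_sub_logLog_isLittleO M).comp_tendsto
    tendsto_cutoff_atTop).trans_isBigO sqrt_logLog_cutoff_isBigO
  exact (hcutoff.add logLog_cutoff_sub_logLog_isLittleO).congr_left fun x => by simp

theorem mertensSum_sub_mertensSum_cutoff_isLittleO :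
    (fun x => mertensSum M x - mertensSum M (cutoff x)) =o[atTop] fun x => √(logLog x) :=
  ((mertensSum_sub_logLog_isLittleO M).sub (mertensSum_cutoff_sub_logLog_isLittleO M)).congr_left
    fun x => by simp

theorem mertensSum_cutoff_isBigO_logLog :
    (fun x => mertensSum M (cutoff x)) =O[atTop] logLog :=
  (((mertensSum_cutoff_sub_logLog_isLittleO M).trans
    sqrt_logLog_isLittleO_logLog).isBigO.add (isBigO_refl logLog atTop)).congr_left fun x => by simp

variable {M} in
theorem divisorProb_mem_Icc {h : ℕ} (hh : 2 ≤ h) {p : M} (hp : Prime p) :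
    divisorProb h p ∈ Set.Icc 0 (norm p : ℝ)⁻¹ := by
  have hquarter := inv_norm_pow_le_quarter hh hp
  have hhalf := inv_norm_le_half hp
  have hsq := inv_norm_pow_le_sq hh p
  have hu : 0 ≤ (norm p : ℝ)⁻¹ := by positivity
  have hv : 0 ≤ ((norm p : ℝ)⁻¹) ^ h := by positivity
  rw [divisorProb]
  have hden : 0 < 1 - ((norm p : ℝ)⁻¹) ^ h := by linarith
  refine ⟨div_nonneg (by nlinarith) hden.le, (div_le_iff₀ hden).mpr ?_⟩
  nlinarith

variable {M} in
theorem abs_divisorProb_sub_le {h : ℕ} (hh : 2 ≤ h) {p : M} (hp : Prime p) :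
    |divisorProb h p - (norm p : ℝ)⁻¹| ≤ 2 * ((norm p : ℝ)⁻¹) ^ 2 := by
  rw [abs_sub_comm, abs_of_nonneg (sub_nonneg.mpr (divisorProb_mem_Icc hh hp).2), divisorProb]
  have hquarter := inv_norm_pow_le_quarter hh hp
  have hsq := inv_norm_pow_le_sq hh p
  have hu : 0 ≤ (norm p : ℝ)⁻¹ := by positivity
  have hv : 0 ≤ ((norm p : ℝ)⁻¹) ^ h := by positivity
  generalize ((norm p : ℝ)⁻¹) ^ h = v at *
  have hsmall := mul_nonneg (sq_nonneg (norm p : ℝ)⁻¹) (by linarith : 0 ≤ 1 - 4 * v)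
  rw [sub_le_iff_le_add, ← sub_le_iff_le_add', le_div_iff₀ (by linarith)]
  nlinarith [mul_nonneg hv hu]

/-- The expected number of prime divisors of norm at most `y` of a random `h`-free element. -/
def meanPrimeCount (h : ℕ) (y : ℝ) : ℝ :=
  ∑ p ∈ primesLE M y, divisorProb h p

theorem abs_meanPrimeCount_sub_mertensSum_le {h : ℕ} (hh : 2 ≤ h) (y : ℝ) :
    |meanPrimeCount M h y - mertensSum M y| ≤ 2 * zeta M 2 := by
  rw [meanPrimeCount, mertensSum, ← Finset.sum_sub_distrib]
  calc _ ≤ ∑ p ∈ primesLE M y, 2 * ((norm p : ℝ)⁻¹) ^ 2 :=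
        (Finset.abs_sum_le_sum_abs _ _).trans
          (Finset.sum_le_sum fun p hp => abs_divisorProb_sub_le hh (prime_of_mem_primesLE hp))
    _ ≤ _ := by
        rw [← Finset.mul_sum]
        gcongr
        exact sum_inv_norm_sq_le_zeta_two M _

theorem meanPrimeCount_cutoff_sub_logLog_isLittleO {h : ℕ} (hh : 2 ≤ h) :
    (fun x => meanPrimeCount M h (cutoff x) - logLog x) =o[atTop] fun x => √(logLog x) := by
  have hdiff : (fun x => meanPrimeCount M h (cutoff x) - mertensSum M (cutoff x)) =O[atTop]
      fun _ => 2 * zeta M 2 :=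
    .of_norm_le fun x => abs_meanPrimeCount_sub_mertensSum_le M hh (cutoff x)
  exact ((hdiff.trans_isLittleO (const_isLittleO_sqrt_logLog _)).add
    (mertensSum_cutoff_sub_logLog_isLittleO M)).congr_left fun x => by simp

theorem norm_prod_one_add_divisorProb_sub_exp_le {h : ℕ} (hh : 2 ≤ h) (y : ℝ) {z : ℂ}
    (hz : ‖z‖ ≤ 1) (hz1 : ‖z - 1‖ ≤ 1) :
    ‖∏ p ∈ primesLE M y, (1 + (z - 1) * (divisorProb h p : ℝ)) -
        Complex.exp ((z - 1) * meanPrimeCount M h y)‖ ≤ ‖z - 1‖ ^ 2 * zeta M 2 := by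
  have hprob : ∀ p ∈ primesLE M y, divisorProb h p ∈ Set.Icc 0 (norm p : ℝ)⁻¹ := fun p hp =>
    divisorProb_mem_Icc hh (prime_of_mem_primesLE hp)
  refine (norm_prod_one_add_sub_exp_le _ (fun p hp => ⟨(hprob p hp).1, ?_⟩) hz hz1).trans ?_
  · exact (hprob p hp).2.trans
      ((inv_norm_le_half (prime_of_mem_primesLE hp)).trans (by norm_num))
  · gcongr
    refine (Finset.sum_le_sum fun p hp => ?_).trans (sum_inv_norm_sq_le_zeta_two M _)
    exact pow_le_pow_left₀ (hprob p hp).1 (hprob p hp).2 2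

end TruncatedMean

section CharacteristicFunction

variable (M : Type*) [CommMonoidWithZero M] [ArithmeticSemigroup M]

theorem tendsto_rpow_neg_mul_exp_mertensSum (t : ℝ) :
    Tendsto (fun x : ℝ => x ^ (-(logLog x / Real.log x)) * Real.exp (‖unitPhase t x - 1‖ *
      (cutoff x ^ (logLog x / Real.log x) * mertensSum M (cutoff x)))) atTop (𝓝 0) := by
  have hsmall : (fun x => ‖unitPhase t x - 1‖ * (Real.exp 1 * mertensSum M (cutoff x)))
      =o[atTop] logLog := by
    simpa only [one_mul] using
      ((isLittleO_one_iff ℝ).mpr (tendsto_norm_unitPhase_sub_one t)).mul_isBigO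
        ((mertensSum_cutoff_isBigO_logLog M).const_mul_left (Real.exp 1))
  have hlim := Real.tendsto_exp_neg_atTop_nhds_zero.comp
    ((IsEquivalent.refl.sub_isLittleO hsmall).symm.tendsto_atTop tendsto_logLog_atTop)
  refine hlim.congr' ?_
  filter_upwards [eventually_gt_atTop 0, Real.tendsto_log_atTop.eventually_gt_atTop 1] with x hx hl
  rw [Function.comp_apply, rpow_neg_logLog_div_log hx (by linarith), cutoff_rpow_logLog_div_log hl,
    ← Real.exp_add, Pi.sub_apply, neg_sub, sub_eq_neg_add]

theorem tendsto_sum_unitPhase_pow_div_sub_exp {h : ℕ} (hh : 2 ≤ h) (t : ℝ) :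
    Tendsto (fun x => (∑ m ∈ hFreeLE M h x, unitPhase t x ^ primeCount (primesLE M (cutoff x)) m) /
        (density M * x * sieveDensity M h (cutoff x) : ℝ) -
      Complex.exp ((unitPhase t x - 1) * meanPrimeCount M h (cutoff x))) atTop (𝓝 0) := by
  obtain ⟨C, -, δ, hδ, hbound⟩ := exists_norm_sum_hFreeLE_div_sub_le M hh
  have hcutoff : Tendsto (fun x => cutoff x ^ (-(1 / 2) : ℝ)) atTop (𝓝 0) :=
    (tendsto_rpow_neg_atTop one_half_pos).comp tendsto_cutoff_atTop
  have herror := ((hcutoff.add (tendsto_rpow_neg_mul_exp_mertensSum M t)).const_mul C).add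
    (((tendsto_norm_unitPhase_sub_one t).pow 2).mul_const (zeta M 2))
  rw [add_zero, mul_zero, zero_add, zero_pow two_ne_zero, zero_mul] at herror
  refine squeeze_zero_norm' ?_ herror
  filter_upwards [eventually_ge_atTop 1, tendsto_cutoff_atTop.eventually_ge_atTop 1,
    tendsto_logLog_atTop.eventually_ge_atTop 0, Real.tendsto_log_atTop.eventually_ge_atTop 0,
    tendsto_logLog_div_log.eventually_le_const hδ,
    (tendsto_norm_unitPhase_sub_one t).eventually_le_const one_pos] with x hx hy hL hl hc hz
  exact (norm_sub_le_norm_sub_add_norm_sub _ _ _).trans (add_le_add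
    (hbound _ (norm_unitPhase t x).le x hx _ hy _ ⟨div_nonneg hL hl, hc⟩)
    (norm_prod_one_add_divisorProb_sub_exp_le M hh _ (norm_unitPhase t x).le hz))

theorem tendsto_sum_unitPhase_pow_div_mul_exp {h : ℕ} (hh : 2 ≤ h) (t : ℝ) :
    Tendsto (fun x => (∑ m ∈ hFreeLE M h x, unitPhase t x ^ primeCount (primesLE M (cutoff x)) m) /
        (density M * x * sieveDensity M h (cutoff x) : ℝ) *
      Complex.exp (-(Complex.I * (t * √(logLog x) : ℝ)))) atTop
      (𝓝 (Complex.exp (-(t ^ 2 / 2) : ℝ))) := by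
  have hmean : (fun x => meanPrimeCount M h (cutoff x) - √(logLog x) ^ 2) =o[atTop]
      fun x => √(logLog x) := by
    refine (meanPrimeCount_cutoff_sub_logLog_isLittleO M hh).congr' ?_ .rfl
    filter_upwards [tendsto_logLog_atTop.eventually_ge_atTop 0] with x hx
    rw [Real.sq_sqrt hx]
  have hmain := (Complex.continuous_exp.tendsto _).comp
    (tendsto_exp_sub_one_mul_sub tendsto_sqrt_logLog_atTop hmean t)
  have herror : Tendsto (fun x => ((∑ m ∈ hFreeLE M h x,
      unitPhase t x ^ primeCount (primesLE M (cutoff x)) m) /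
        (density M * x * sieveDensity M h (cutoff x) : ℝ) -
      Complex.exp ((unitPhase t x - 1) * meanPrimeCount M h (cutoff x))) *
        Complex.exp (-(Complex.I * (t * √(logLog x) : ℝ)))) atTop (𝓝 0) := by
    refine (tendsto_sum_unitPhase_pow_div_sub_exp M hh t).zero_mul_isBoundedUnder_le
      (isBoundedUnder_of ⟨1, fun x => ?_⟩)
    rw [Function.comp_apply, ← mul_neg, ← Complex.ofReal_neg, Complex.norm_exp_I_mul_ofReal]
  have hsum := herror.add hmain
  rw [zero_add] at hsum
  refine hsum.congr fun x => ?_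
  rw [Function.comp_apply, sub_mul, ← unitPhase, ← Complex.exp_add, ← sub_eq_add_neg,
    sub_add_cancel]

theorem tendsto_card_hFreeLE_div {h : ℕ} (hh : 2 ≤ h) :
    Tendsto (fun x => ((hFreeLE M h x).card : ℝ) /
      (density M * x * sieveDensity M h (cutoff x))) atTop (𝓝 1) := by
  have hzero := tendsto_sum_unitPhase_pow_div_mul_exp M hh 0
  have hre := (Complex.continuous_re.tendsto _).comp hzero
  simp only [unitPhase, Function.comp_def, zero_div, Complex.ofReal_zero, mul_zero, zero_mul,
    Complex.exp_zero, one_pow, Finset.sum_const, nsmul_eq_mul, mul_one, neg_zero, ne_eq,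
    two_ne_zero, not_false_eq_true, zero_pow, ← Complex.ofReal_natCast, ← Complex.ofReal_div,
    Complex.ofReal_re, Complex.one_re] at hre
  exact hre

theorem exists_eventually_mul_le_card_hFreeLE {h : ℕ} (hh : 2 ≤ h) :
    ∃ c > (0 : ℝ), ∀ᶠ x in atTop, c * x ≤ (hFreeLE M h x).card := by
  have hκ := density_pos M
  refine ⟨density M * Real.exp (-(2 * zeta M 2)) / 2, by positivity, ?_⟩
  filter_upwards [(tendsto_card_hFreeLE_div M hh).eventually_const_le one_half_lt_one,
    eventually_gt_atTop 0] with x hx hx0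
  have hsieve := exp_neg_zeta_two_le_sieveDensity M hh (cutoff x)
  rw [le_div_iff₀ (mul_pos (by positivity) (sieveDensity_pos hh _))] at hx
  calc _ = 1 / 2 * (density M * x * Real.exp (-(2 * zeta M 2))) := by ring
    _ ≤ 1 / 2 * (density M * x * sieveDensity M h (cutoff x)) := by gcongr
    _ ≤ _ := hx

theorem tendsto_charFun_primeCount_cutoff {h : ℕ} (hh : 2 ≤ h) (t : ℝ) :
    Tendsto (fun x => ((hFreeLE M h x).card : ℂ)⁻¹ * ∑ m ∈ hFreeLE M h x, Complex.exp
      ((t * ((primeCount (primesLE M (cutoff x)) m - logLog x) / √(logLog x)) : ℝ) * Complex.I))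
      atTop (𝓝 (Complex.exp (-(t ^ 2 / 2) : ℝ))) := by
  have hcard := (Complex.continuous_ofReal.tendsto _).comp (tendsto_card_hFreeLE_div M hh)
  have hratio := (tendsto_sum_unitPhase_pow_div_mul_exp M hh t).div hcard
    (Complex.ofReal_ne_zero.mpr one_ne_zero)
  rw [Complex.ofReal_one, div_one] at hratio
  refine hratio.congr' ?_
  filter_upwards [eventually_gt_atTop 0] with x hx
  have hκ := density_pos M
  have hden : ((density M * x * sieveDensity M h (cutoff x) : ℝ) : ℂ) ≠ 0 :=
    Complex.ofReal_ne_zero.mpr (mul_pos (by positivity) (sieveDensity_pos hh _)).ne'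
  simp only [exp_mul_div_sqrt_logLog_mul_I]
  rw [← Finset.sum_mul, Pi.div_apply, Function.comp_apply, Complex.ofReal_div,
    div_mul_eq_mul_div, div_div_div_cancel_right₀ hden, Complex.ofReal_natCast, div_eq_inv_mul]

end CharacteristicFunction

end ArithmeticSemigroup

/-! ### From characteristic functions to distribution functions -/

section Gaussian

open ProbabilityTheory

theorem gaussPhi_eq_integral (γ : ℝ) :
    gaussPhi γ = ∫ u in Set.Iic γ, gaussianPDFReal 0 1 u := by
  rw [gaussPhi, ← integral_const_mul]
  simp only [gaussianPDFReal, NNReal.coe_one, mul_one, sub_zero]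

theorem gaussPhi_eq_gaussianReal_Iic (γ : ℝ) :
    gaussPhi γ = (gaussianReal 0 1).real (Set.Iic γ) := by
  rw [gaussPhi_eq_integral, Measure.real, gaussianReal_apply_eq_integral _ one_ne_zero,
    ENNReal.toReal_ofReal (integral_nonneg fun _ => gaussianPDFReal_nonneg _ _ _)]

theorem continuous_gaussPhi : Continuous gaussPhi := by
  have hint : Integrable (gaussianPDFReal 0 1) := integrable_gaussianPDFReal 0 1
  have hsplit : gaussPhi = fun γ => gaussPhi 0 + ∫ u in (0 : ℝ)..γ, gaussianPDFReal 0 1 u := by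
    ext γ
    rw [gaussPhi_eq_integral, gaussPhi_eq_integral, ← intervalIntegral.integral_Iic_sub_Iic
      hint.integrableOn hint.integrableOn, add_sub_cancel]
  rw [hsplit]
  exact continuous_const.add
    (intervalIntegral.continuous_primitive (fun _ _ => hint.intervalIntegrable) 0)

end Gaussian

section EmpiricalDistribution

open scoped ENNReal

variable {α : Type*}

/-- The law of `X m` for `m` uniformly distributed on `S`, with value `0` if `S` is empty. -/
def empiricalMeasure (S : Finset α) (X : α → ℝ) : Measure ℝ :=
  (S.card : ℝ≥0∞)⁻¹ • ∑ m ∈ S, Measure.dirac (X m)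

theorem isProbabilityMeasure_empiricalMeasure {S : Finset α} (hS : S.Nonempty) (X : α → ℝ) :
    IsProbabilityMeasure (empiricalMeasure S X) := by
  refine ⟨?_⟩
  have hcard : (S.card : ℝ≥0∞) ≠ 0 := Nat.cast_ne_zero.mpr hS.card_ne_zero
  simp [empiricalMeasure, ENNReal.inv_mul_cancel hcard (ENNReal.natCast_ne_top _)]

theorem charFun_empiricalMeasure (S : Finset α) (X : α → ℝ) (t : ℝ) :
    charFun (empiricalMeasure S X) t =
      (S.card : ℂ)⁻¹ * ∑ m ∈ S, Complex.exp ((t * X m : ℝ) * Complex.I) := by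
  rw [charFun_apply_real, empiricalMeasure, integral_smul_measure,
    integral_finsetSum_measure fun _ _ => integrable_dirac (by simp)]
  simp

theorem empiricalMeasure_real_Iic (S : Finset α) (X : α → ℝ) (γ : ℝ) :
    (empiricalMeasure S X).real (Set.Iic γ) = ({m ∈ S | X m ≤ γ}.card : ℝ) / S.card := by
  rw [Measure.real, empiricalMeasure]
  simp only [Measure.smul_apply, Measure.finsetSum_apply, smul_eq_mul, ENNReal.toReal_mul,
    Measure.dirac_apply' _ measurableSet_Iic, Set.indicator_apply, Set.mem_Iic, Pi.one_apply,
    Finset.sum_boole, ENNReal.toReal_inv, ENNReal.toReal_natCast, div_eq_inv_mul]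

theorem tendsto_card_filter_le_div_card_of_seq {ν : Measure ℝ} [IsProbabilityMeasure ν]
    {S : ℕ → Finset α} {X : ℕ → α → ℝ} (hS : ∀ n, (S n).Nonempty)
    (hchar : ∀ t : ℝ, Tendsto (fun n => ((S n).card : ℂ)⁻¹ *
      ∑ m ∈ S n, Complex.exp ((t * X n m : ℝ) * Complex.I)) atTop (𝓝 (charFun ν t)))
    {γ : ℝ} (hγ : ν {γ} = 0) :
    Tendsto (fun n => ({m ∈ S n | X n m ≤ γ}.card : ℝ) / (S n).card) atTop
      (𝓝 (ν.real (Set.Iic γ))) := by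
  let law : ℕ → ProbabilityMeasure ℝ := fun n =>
    ⟨empiricalMeasure (S n) (X n), isProbabilityMeasure_empiricalMeasure (hS n) (X n)⟩
  have hlaw : Tendsto law atTop (𝓝 ⟨ν, inferInstance⟩) :=
    ProbabilityMeasure.tendsto_iff_tendsto_charFun.mpr fun t =>
      (hchar t).congr fun n => (charFun_empiricalMeasure (S n) (X n) t).symm
  have hIic := ProbabilityMeasure.tendsto_measure_of_null_frontier_of_tendsto' hlaw
    (E := Set.Iic γ) (by rwa [frontier_Iic])
  exact ((ENNReal.tendsto_toReal (measure_ne_top ν _)).comp hIic).congr fun n =>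
    empiricalMeasure_real_Iic (S n) (X n) γ

theorem tendsto_card_filter_le_div_card {ι : Type*} {l : Filter ι} [l.IsCountablyGenerated]
    {ν : Measure ℝ} [IsProbabilityMeasure ν] {S : ι → Finset α} {X : ι → α → ℝ}
    (hS : ∀ᶠ i in l, (S i).Nonempty)
    (hchar : ∀ t : ℝ, Tendsto (fun i => ((S i).card : ℂ)⁻¹ *
      ∑ m ∈ S i, Complex.exp ((t * X i m : ℝ) * Complex.I)) l (𝓝 (charFun ν t)))
    {γ : ℝ} (hγ : ν {γ} = 0) :
    Tendsto (fun i => ({m ∈ S i | X i m ≤ γ}.card : ℝ) / (S i).card) l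
      (𝓝 (ν.real (Set.Iic γ))) := by
  refine tendsto_of_seq_tendsto fun u hu => ?_
  obtain ⟨N, hN⟩ := eventually_atTop.mp (hu.eventually hS)
  rw [← tendsto_add_atTop_iff_nat N]
  exact tendsto_card_filter_le_div_card_of_seq (fun n => hN _ (Nat.le_add_left N n))
    (fun t => ((hchar t).comp hu).comp (tendsto_add_atTop_nat N)) hγ

theorem tendsto_card_filter_le_div_card_gaussPhi {ι : Type*} {l : Filter ι}
    [l.IsCountablyGenerated] {S : ι → Finset α} {X : ι → α → ℝ} (hS : ∀ᶠ i in l, (S i).Nonempty)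
    (hchar : ∀ t : ℝ, Tendsto (fun i => ((S i).card : ℂ)⁻¹ *
      ∑ m ∈ S i, Complex.exp ((t * X i m : ℝ) * Complex.I)) l
        (𝓝 (Complex.exp (-(t ^ 2 / 2) : ℝ)))) (γ : ℝ) :
    Tendsto (fun i => ({m ∈ S i | X i m ≤ γ}.card : ℝ) / (S i).card) l (𝓝 (gaussPhi γ)) := by
  have := ProbabilityTheory.nullSingletonClass_gaussianReal (μ := 0) (v := 1) one_ne_zero
  rw [gaussPhi_eq_gaussianReal_Iic]
  refine tendsto_card_filter_le_div_card hS (fun t => ?_) (measure_singleton γ)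
  rw [ProbabilityTheory.charFun_gaussianReal]
  convert hchar t using 3
  push_cast
  ring

theorem card_filter_le_card_filter_add {S E : Finset α} {P Q : α → Prop} [DecidablePred P]
    [DecidablePred Q]
    (h : ∀ m ∈ S, m ∉ E → P m → Q m) :
    {m ∈ S | P m}.card ≤ {m ∈ S | Q m}.card + E.card := by
  classical
  refine (Finset.card_le_card fun m hm => ?_).trans (Finset.card_union_le _ E)
  rw [Finset.mem_filter] at hm
  rw [Finset.mem_union, Finset.mem_filter]
  by_cases hE : m ∈ E
  · exact .inr hE
  · exact .inl ⟨hm.1, h m hm.1 hE hm.2⟩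

theorem tendsto_of_forall_eventually_sandwich {ι : Type*} {l : Filter ι} {F : ℝ → ℝ}
    {u : ℝ → ι → ℝ} {v : ι → ℝ} {γ : ℝ} (hF : ContinuousAt F γ)
    (hu : ∀ γ', Tendsto (u γ') l (𝓝 (F γ')))
    (hv : ∀ ε > 0, ∃ e : ι → ℝ, Tendsto e l (𝓝 0) ∧
      ∀ᶠ i in l, u (γ - ε) i ≤ v i + e i ∧ v i ≤ u (γ + ε) i + e i) :
    Tendsto v l (𝓝 (F γ)) := by
  have hshift (s : ℝ) : Tendsto (fun ε => F (γ + s * ε)) (𝓝[>] 0) (𝓝 (F γ)) := by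
    refine hF.tendsto.comp (tendsto_nhdsWithin_of_tendsto_nhds ?_)
    exact Continuous.tendsto' (by fun_prop) _ _ (by simp)
  refine tendsto_order.mpr ⟨fun a ha => ?_, fun a ha => ?_⟩
  · obtain ⟨ε, hFε, hε⟩ :=
      (((hshift (-1)).eventually (lt_mem_nhds ha)).and self_mem_nhdsWithin).exists
    obtain ⟨e, he, hsandwich⟩ := hv ε hε
    rw [neg_one_mul, ← sub_eq_add_neg] at hFε
    have hlim := (hu (γ - ε)).sub he
    rw [sub_zero] at hlim
    filter_upwards [hlim.eventually (lt_mem_nhds hFε), hsandwich] with i hi hsi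
    linarith [hsi.1]
  · obtain ⟨ε, hFε, hε⟩ :=
      (((hshift 1).eventually (gt_mem_nhds ha)).and self_mem_nhdsWithin).exists
    obtain ⟨e, he, hsandwich⟩ := hv ε hε
    rw [one_mul] at hFε
    have hlim := (hu (γ + ε)).add he
    rw [add_zero] at hlim
    filter_upwards [hlim.eventually (gt_mem_nhds hFε), hsandwich] with i hi hsi
    linarith [hsi.2]

theorem tendsto_card_filter_div_card_of_sandwich {ι : Type*} {l : Filter ι} {S : ι → Finset α}
    {X : ι → α → ℝ} {P : ι → α → Prop} [∀ i, DecidablePred (P i)] {F : ℝ → ℝ} {γ : ℝ}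
    (hF : ContinuousAt F γ)
    (hX : ∀ γ', Tendsto (fun i => ({m ∈ S i | X i m ≤ γ'}.card : ℝ) / (S i).card) l (𝓝 (F γ')))
    (hP : ∀ ε > 0, ∃ E : ι → Finset α,
      Tendsto (fun i => ((E i).card : ℝ) / (S i).card) l (𝓝 0) ∧
      ∀ᶠ i in l, ∀ m ∈ S i, m ∉ E i → (P i m → X i m ≤ γ + ε) ∧ (X i m ≤ γ - ε → P i m)) :
    Tendsto (fun i => ({m ∈ S i | P i m}.card : ℝ) / (S i).card) l (𝓝 (F γ)) := by
  refine tendsto_of_forall_eventually_sandwich hF hX fun ε hε => ?_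
  obtain ⟨E, hE, hsandwich⟩ := hP ε hε
  refine ⟨_, hE, hsandwich.mono fun i hi => ⟨?_, ?_⟩⟩ <;> rw [← add_div] <;> gcongr <;> norm_cast
  · exact card_filter_le_card_filter_add fun m hm hmE => (hi m hm hmE).2
  · exact card_filter_le_card_filter_add fun m hm hmE => (hi m hm hmE).1

end EmpiricalDistribution

/-! ### From truncated to full prime divisor counts -/

theorem sub_div_sqrt_le_transfer {L l γ ε w w' : ℝ} (hL : 1 < L) (hLl : L - 1 ≤ l) (hlL : l ≤ L)
    (hε : 1 + |γ| ≤ ε * √L) (hw : w' ≤ w) (hww' : w - w' ≤ ε * √L) :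
    ((w - l) / √l ≤ γ → (w' - L) / √L ≤ γ + 3 * ε) ∧
      ((w' - L) / √L ≤ γ - 3 * ε → (w - l) / √l ≤ γ) := by
  have hl : 0 < l := by linarith
  have hsqrt_l : 0 < √l := Real.sqrt_pos.mpr hl
  have hsqrt_L : 0 < √L := Real.sqrt_pos.mpr (by linarith)
  have hsqrt_le : √l ≤ √L := Real.sqrt_le_sqrt hlL
  have hle_sqrt : √L ≤ √l + 1 := by
    refine Real.sqrt_le_iff.mpr ⟨by positivity, ?_⟩
    nlinarith [Real.sq_sqrt hl.le]
  have hγ : |γ * √l - γ * √L| ≤ |γ| := by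
    rw [← mul_sub, abs_mul]
    refine mul_le_of_le_one_right (abs_nonneg _) (abs_le.mpr ⟨?_, ?_⟩) <;> linarith
  obtain ⟨hγ_lower, hγ_upper⟩ := abs_le.mp hγ
  have := abs_nonneg γ
  rw [div_le_iff₀ hsqrt_l, div_le_iff₀ hsqrt_L, div_le_iff₀ hsqrt_L]
  constructor <;> intro h <;> linarith

theorem logLog_sub_one_le_of_sqrt_le {x y : ℝ} (hx : 1 < x) (hxy : √x ≤ y) :
    logLog x - 1 ≤ logLog y := by
  have hlog : 0 < Real.log x := Real.log_pos hx
  calc logLog x - 1 ≤ logLog x - Real.log 2 := by linarith [Real.log_two_lt_d9]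
    _ = Real.log (Real.log √x) := by
      rw [Real.log_sqrt (by linarith), Real.log_div hlog.ne' two_ne_zero, logLog]
    _ ≤ logLog y := by
      have hlog_sqrt : 0 < Real.log √x := by
        rw [Real.log_sqrt (by linarith)]; positivity
      exact Real.log_le_log hlog_sqrt (Real.log_le_log (Real.sqrt_pos.mpr (by linarith)) hxy)

theorem logLog_le_logLog {x y : ℝ} (hx : 1 < x) (hxy : x ≤ y) : logLog x ≤ logLog y :=
  Real.log_le_log (Real.log_pos hx) (Real.log_le_log (by linarith) hxy)

namespace ArithmeticSemigroup

section Transfer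

variable {M : Type*} [CommMonoidWithZero M]

open scoped Classical in
theorem primeCount_sub_primeCount {P Q : Finset M} (hPQ : P ⊆ Q) (m : M) :
    (primeCount Q m : ℝ) - primeCount P m = ∑ p ∈ Q \ P, if p ∣ m then 1 else 0 := by
  simp only [primeCount, Finset.card_filter, Nat.cast_sum, Nat.cast_ite, Nat.cast_one,
    Nat.cast_zero]
  rw [← Finset.sum_sdiff hPQ, add_sub_cancel_right]

theorem primeCount_mono {P Q : Finset M} (hPQ : P ⊆ Q) (m : M) :
    primeCount P m ≤ primeCount Q m := by
  classical exact Finset.card_le_card (Finset.filter_subset_filter _ hPQ)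

variable [ArithmeticSemigroup M]

variable (M)

theorem primesLE_mono : Monotone (primesLE M) := fun x y hxy p hp => by
  rw [mem_primesLE] at hp ⊢
  exact ⟨hp.1, hp.2.trans hxy⟩

theorem exists_sum_primeCount_sub_le : ∃ C : ℝ, ∀ (h : ℕ) (x y : ℝ), 0 ≤ x → y ≤ x →
    ∑ m ∈ hFreeLE M h x, ((primeCount (primesLE M x) m : ℝ) - primeCount (primesLE M y) m) ≤
      C * x * (mertensSum M x - mertensSum M y) := by
  classical
  obtain ⟨C, -, hcount⟩ := exists_card_elementsLE_le M
  refine ⟨C, fun h x y hx hyx => ?_⟩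
  have hsub := primesLE_mono M hyx
  simp_rw [primeCount_sub_primeCount hsub]
  rw [mertensSum, mertensSum, ← Finset.sum_sdiff hsub, add_sub_cancel_right, Finset.mul_sum,
    Finset.sum_comm]
  refine Finset.sum_le_sum fun p hp => ?_
  have hp0 : p ≠ 0 := (prime_of_mem_primesLE (Finset.mem_sdiff.mp hp).1).ne_zero
  rw [Finset.sum_boole]
  calc (({m ∈ hFreeLE M h x | p ∣ m}.card : ℕ) : ℝ) ≤ (multiplesLE x p).card := by
        refine Nat.cast_le.mpr (Finset.card_le_card fun m hm => ?_)
        rw [Finset.mem_filter, mem_hFreeLE] at hm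
        exact mem_multiplesLE.mpr ⟨hm.1.1, hm.2⟩
    _ = (elementsLE M (x / norm p)).card := by rw [card_multiplesLE x hp0]
    _ ≤ C * (x / norm p) := hcount _ (by positivity)
    _ = C * x * (norm p : ℝ)⁻¹ := by ring

open scoped Classical in
/-- The exceptional elements in the passage from the primes up to `cutoff x` to all primes: those
of small norm, and those with at least `ε * √(log log x)` prime divisors above `cutoff x`. -/
def exceptionalLE (h : ℕ) (ε x : ℝ) : Finset M :=
  {m ∈ hFreeLE M h x | (norm m : ℝ) < √x ∨ ε * √(logLog x) ≤
    (primeCount (primesLE M x) m : ℝ) - primeCount (primesLE M (cutoff x)) m}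

theorem exists_card_exceptionalLE_le : ∃ C D : ℝ, ∀ (h : ℕ) {ε x : ℝ}, 0 ≤ x →
    cutoff x ≤ x → 0 < ε * √(logLog x) →
      ((exceptionalLE M h ε x).card : ℝ) ≤
        C * √x + D * x * (mertensSum M x - mertensSum M (cutoff x)) / (ε * √(logLog x)) := by
  classical
  obtain ⟨C, -, hcount⟩ := exists_card_elementsLE_le M
  obtain ⟨D, hsum⟩ := exists_sum_primeCount_sub_le M
  refine ⟨C, D, fun h ε x hx hcut hpos => ?_⟩
  rw [exceptionalLE, Finset.filter_or]
  refine (Nat.cast_le.mpr (Finset.card_union_le _ _)).trans ?_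
  rw [Nat.cast_add]
  refine add_le_add ?_ ?_
  · refine (Nat.cast_le.mpr (Finset.card_le_card fun m hm => ?_)).trans
      (hcount √x (Real.sqrt_nonneg x))
    rw [Finset.mem_filter, mem_hFreeLE] at hm
    exact mem_elementsLE.mpr ⟨hm.1.1.1, hm.2.le⟩
  · rw [le_div_iff₀ hpos, ← nsmul_eq_mul]
    refine le_trans ?_ (hsum h x (cutoff x) hx hcut)
    refine (Finset.card_nsmul_le_sum _ _ _ fun m hm => (Finset.mem_filter.mp hm).2).trans ?_
    refine Finset.sum_le_sum_of_subset_of_nonneg (Finset.filter_subset _ _) fun m _ _ => ?_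
    exact sub_nonneg.mpr (Nat.cast_le.mpr (primeCount_mono (primesLE_mono M hcut) m))

theorem tendsto_card_exceptionalLE_div {h : ℕ} (hh : 2 ≤ h) {ε : ℝ} (hε : 0 < ε) :
    Tendsto (fun x => ((exceptionalLE M h ε x).card : ℝ) / (hFreeLE M h x).card) atTop (𝓝 0) := by
  obtain ⟨C, D, hcard⟩ := exists_card_exceptionalLE_le M
  obtain ⟨c, hc, hlower⟩ := exists_eventually_mul_le_card_hFreeLE M hh
  have hbound : Tendsto (fun x => C / c * (√x)⁻¹ + D / (ε * c) *
      ((mertensSum M x - mertensSum M (cutoff x)) / √(logLog x))) atTop (𝓝 0) := by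
    simpa using (Real.tendsto_sqrt_atTop.inv_tendsto_atTop.const_mul (C / c)).add
      ((mertensSum_sub_mertensSum_cutoff_isLittleO M).tendsto_div_nhds_zero.const_mul
        (D / (ε * c)))
  refine squeeze_zero' (.of_forall fun x => by positivity) ?_ hbound
  filter_upwards [hlower, eventually_gt_atTop 0, eventually_cutoff_le,
    tendsto_sqrt_logLog_atTop.eventually_gt_atTop 0] with x hcx hx hcut hL
  calc ((exceptionalLE M h ε x).card : ℝ) / (hFreeLE M h x).card
      ≤ (C * √x + D * x * (mertensSum M x - mertensSum M (cutoff x)) / (ε * √(logLog x))) /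
          (c * x) := by
        have hE := hcard h hx.le hcut (mul_pos hε hL)
        exact div_le_div₀ ((Nat.cast_nonneg _).trans hE) hE (by positivity) hcx
    _ = C / c * (√x / x) + D / (ε * c) *
          ((mertensSum M x - mertensSum M (cutoff x)) / √(logLog x)) := by field_simp
    _ = _ := by rw [Real.sqrt_div_self', one_div]

variable {M}

theorem le_transfer_of_notMem_exceptionalLE {h : ℕ} {γ ε x : ℝ} {m : M} (hx : 9 ≤ x)
    (hcut : cutoff x ≤ x) (hL : 1 < logLog x) (hε : 1 + |γ| ≤ ε * √(logLog x))
    (hm : m ∈ hFreeLE M h x) (hmE : m ∉ exceptionalLE M h ε x) :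
    ((3 ≤ norm m ∧ (primeCount (primesLE M x) m - logLog (norm m)) / √(logLog (norm m)) ≤ γ) →
        (primeCount (primesLE M (cutoff x)) m - logLog x) / √(logLog x) ≤ γ + 3 * ε) ∧
      ((primeCount (primesLE M (cutoff x)) m - logLog x) / √(logLog x) ≤ γ - 3 * ε →
        (3 ≤ norm m ∧
          (primeCount (primesLE M x) m - logLog (norm m)) / √(logLog (norm m)) ≤ γ)) := by
  simp only [exceptionalLE, Finset.mem_filter, hm, true_and] at hmE
  push Not at hmE
  obtain ⟨hsqrt, hdiff⟩ := hmE
  have hnorm : (3 : ℝ) ≤ norm m := (Real.le_sqrt_of_sq_le (by linarith)).trans hsqrt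
  have hlogLog_ge := logLog_sub_one_le_of_sqrt_le (by linarith) hsqrt
  have hlogLog_le := logLog_le_logLog (by linarith) (mem_hFreeLE.mp hm).1.2
  obtain ⟨hle, hge⟩ := sub_div_sqrt_le_transfer hL hlogLog_ge hlogLog_le hε
    (Nat.cast_le.mpr (primeCount_mono (primesLE_mono M hcut) m)) hdiff.le
  exact ⟨fun hmγ => hle hmγ.2, fun hmγ => ⟨by exact_mod_cast hnorm, hge hmγ⟩⟩

variable (M)

open scoped Classical in
theorem tendsto_card_primeCount_primesLE_div {h : ℕ} (hh : 2 ≤ h) (γ : ℝ) :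
    Tendsto (fun x => ({m ∈ hFreeLE M h x | 3 ≤ norm m ∧
        (primeCount (primesLE M x) m - logLog (norm m)) / √(logLog (norm m)) ≤ γ}.card : ℝ) /
      (hFreeLE M h x).card) atTop (𝓝 (gaussPhi γ)) := by
  have hnonempty : ∀ᶠ x in atTop, (hFreeLE M h x).Nonempty := by
    obtain ⟨c, hc, hlower⟩ := exists_eventually_mul_le_card_hFreeLE M hh
    filter_upwards [hlower, eventually_gt_atTop 0] with x hcx hx
    exact Finset.card_pos.mp (Nat.cast_pos.mp ((mul_pos hc hx).trans_le hcx))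
  refine tendsto_card_filter_div_card_of_sandwich continuous_gaussPhi.continuousAt
    (tendsto_card_filter_le_div_card_gaussPhi hnonempty (tendsto_charFun_primeCount_cutoff M hh))
    fun ε hε => ⟨_, tendsto_card_exceptionalLE_div M hh (div_pos hε three_pos), ?_⟩
  filter_upwards [eventually_ge_atTop 9, eventually_cutoff_le,
    tendsto_logLog_atTop.eventually_gt_atTop 1,
    tendsto_sqrt_logLog_atTop.eventually_ge_atTop ((1 + |γ|) / (ε / 3))] with x hx hcut hL hsqrt
  rw [div_le_iff₀' (by positivity)] at hsqrt
  intro m hm hmE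
  simpa only [mul_div_cancel₀ ε (three_ne_zero' ℝ)] using
    le_transfer_of_notMem_exceptionalLE hx hcut hL hsqrt hm hmE

end Transfer

section ErdosKac

variable {M : Type*} [CommMonoidWithZero M]

/-- The number `ω(m)` of distinct prime divisors of `m`. -/
def omega (m : M) : ℕ :=
  Nat.card {p : M // Prime p ∧ p ∣ m}

theorem omega_eq_primeCount_primesLE [ArithmeticSemigroup M] {x : ℝ} {m : M} (hm : m ≠ 0)
    (hmx : (norm m : ℝ) ≤ x) : omega m = primeCount (primesLE M x) m := by
  refine Nat.subtype_card _ fun p => ?_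
  simp only [Finset.mem_filter, mem_primesLE]
  exact ⟨fun hp => ⟨hp.1.1, hp.2⟩, fun hp => ⟨⟨hp.1, (norm_le_of_dvd hm hp.2).trans hmx⟩, hp.2⟩⟩

end ErdosKac

end ArithmeticSemigroup

open ArithmeticSemigroup

theorem erdosKac_hFree_ideals_general (M : Type*) [CommMonoidWithZero M] [ArithmeticSemigroup M]
    {h : ℕ} (hh : 2 ≤ h) (γ : ℝ) :
    Tendsto (fun x : ℝ =>
      (Nat.card {m : M // (m ≠ 0 ∧ HFree h m) ∧ (norm m : ℝ) ≤ x ∧ 3 ≤ norm m ∧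
          ((omega m : ℝ) - Real.log (Real.log (norm m))) / √(Real.log (Real.log (norm m))) ≤ γ} :
            ℝ) /
        (Nat.card {m : M // (m ≠ 0 ∧ HFree h m) ∧ (norm m : ℝ) ≤ x} : ℝ))
      atTop (𝓝 (gaussPhi γ)) := by
  classical
  refine (tendsto_card_primeCount_primesLE_div M hh γ).congr fun x => ?_
  congr 2 <;> refine (Nat.subtype_card _ fun m => ?_).symm
  · rw [Finset.mem_filter, mem_hFreeLE, and_right_comm (a := m ≠ 0), and_assoc]
    refine and_congr_right fun hm => and_congr_right fun hmx => ?_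
    rw [omega_eq_primeCount_primesLE hm.1 hmx, logLog]
  · rw [mem_hFreeLE, and_right_comm]

/-! ### Ideals of number fields -/

section Ideals

open NumberField Ideal ArithmeticSemigroup
open scoped nonZeroDivisors

section Instance

variable (F : Type*) [Field F] [NumberField F]

instance : ArithmeticSemigroup (Ideal (𝓞 F)) where
  subsingleton_units := inferInstance
  norm := absNorm
  finite_norm_le n := finite_setOfPred_absNorm_le n
  exists_card_sub_isBigO := by
    obtain ⟨κ, hκ, hcount⟩ := exists_card_absNorm_le_sub_isBigO F
    have hdegree : 0 < 1 / (Module.finrank ℚ F : ℝ) :=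
      one_div_pos.mpr (Nat.cast_pos.mpr Module.finrank_pos)
    refine ⟨κ, hκ, _, hdegree, hcount.congr_left fun x => ?_⟩
    have hequiv : {I : (Ideal (𝓞 F))⁰ // (absNorm (I : Ideal (𝓞 F)) : ℝ) ≤ x} ≃
        {I : Ideal (𝓞 F) // I ≠ 0 ∧ (absNorm I : ℝ) ≤ x} :=
      (Equiv.subtypeSubtypeEquivSubtypeInter _ fun I : Ideal (𝓞 F) => (absNorm I : ℝ) ≤ x).trans
        (Equiv.subtypeEquivRight fun I => by rw [mem_nonZeroDivisors_iff_ne_zero])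
    rw [Nat.card_congr hequiv]

end Instance

variable {K}

theorem prime_iff_isPrime_of_dvd {p m : Ideal (𝓞 K)} (hm : m ≠ 0) (hpm : p ∣ m) :
    Prime p ↔ p.IsPrime :=
  prime_iff_isPrime (ne_zero_of_dvd_ne_zero hm hpm)

theorem omegaI_eq_omega {m : Ideal (𝓞 K)} (hm : m ≠ 0) : omegaI K m = omega m :=
  Nat.card_congr (Equiv.subtypeEquivRight fun _ =>
    and_congr_left fun hpm => (prime_iff_isPrime_of_dvd hm hpm).symm)

theorem isHFree_iff {h : ℕ} (hh : h ≠ 0) {m : Ideal (𝓞 K)} :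
    IsHFree K h m ↔ m ≠ 0 ∧ HFree h m :=
  and_congr_right fun hm => forall_congr' fun _ => ⟨fun H hp => H (isPrime_of_prime hp),
    fun H hp hd =>
      H ((prime_iff_isPrime_of_dvd hm ((dvd_pow_self _ hh).trans hd)).mpr hp) hd⟩

end Ideals

/-- **The Erdős–Kac theorem for `h`-free ideals of a number field.** -/
theorem erdosKac_hFree_ideals (h : ℕ) (hh : 2 ≤ h) (γ : ℝ) :
    Tendsto (fun x : ℝ =>
      (Nat.card {m : Ideal (NumberField.RingOfIntegers K) //
          IsHFree K h m ∧ (Ideal.absNorm m : ℝ) ≤ x ∧ 3 ≤ Ideal.absNorm m ∧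
          ((omegaI K m : ℝ) - Real.log (Real.log (Ideal.absNorm m))) /
            Real.sqrt (Real.log (Real.log (Ideal.absNorm m))) ≤ γ} : ℝ) /
        (Nat.card {m : Ideal (NumberField.RingOfIntegers K) //
          IsHFree K h m ∧ (Ideal.absNorm m : ℝ) ≤ x} : ℝ))
      atTop (𝓝 (gaussPhi γ)) := by
  refine (erdosKac_hFree_ideals_general (Ideal (NumberField.RingOfIntegers K)) hh γ).congr
    fun x => ?_
  congr 2 <;> refine Nat.card_congr (Equiv.subtypeEquivRight fun m => ?_) <;>
    rw [isHFree_iff (by omega : h ≠ 0)]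
  · refine and_congr_right fun hm => ?_
    rw [omegaI_eq_omega hm.1]
    rfl
  · rfl

end
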